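/- arXiv:2206.01391 — 4 statements merged into one kernel-verified Lean document; each statement's English description precedes it below -/
import Mathlib

section
/- Let x ≥ 3.5 be a half-integer (x = m + 1/2 for some positive integer m) and let T ≥ 1/log(3/2). Then the series ∑_{n=2}^∞ (x/n)^{1/log x} · (Λ(n)/(n·log n)) · min{1, 1/(T·|log(x/n)|)} is at most R(x)/T, where R(x) = 40.23·log(log x) + 58.12 + 3.87/log x + 5.22·(log x)/√x − 1.84/√x. -/
/-!
The terms with `|log (x / n)| ≥ log (3 / 2)` are compared with those of the Dirichlet series
`∑ Λ(n) / (n ^ s log n) = log ζ(s)` at `s = 1 + 1 / log x`, whose sum is at most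
`log (1 + 1 / (s - 1)) ≤ log log x + 1 / log x`.

A term with `n` closer to `x` is nonzero only at a prime power, where it is at most
`(9 / 4) / |x - n|`. The distance of `n` to the half-integer `x` is at least `1 / 2`, and one splits
the prime powers on each side of `x` into dyadic shells with `|x - n|` about `2 ^ k`. By Selberg's
sieve of level `N ^ 2`, with `N = 2 ^ ⌊k / 3⌋`, an interval of length `2 ^ k` contains
`O(2 ^ k / k)` prime powers. The shells therefore contribute a harmonic sum over `k ≤ log₂ x`, which
is again of size `log log x`.
-/

open ArithmeticFunction Finset

section Sieve

theorem sum_divisors_filter_dvd_moebius {n : ℕ} (hn : Squarefree n) (l : ℕ) :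
    ∑ d ∈ n.divisors with l ∣ d, moebius d = if l = n then moebius n else 0 := by
  by_cases hl : l ∣ n
  · obtain ⟨m, rfl⟩ := hl
    obtain ⟨hl0, hm0⟩ := mul_ne_zero_iff.mp hn.ne_zero
    have himage : {d ∈ (l * m).divisors | l ∣ d} = m.divisors.image (l * ·) := by
      ext d
      simp only [mem_filter, Nat.mem_divisors, mem_image, ne_eq]
      constructor
      · rintro ⟨⟨hd, -⟩, e, rfl⟩
        exact ⟨e, ⟨Nat.dvd_of_mul_dvd_mul_left (Nat.pos_of_ne_zero hl0) hd, hm0⟩, rfl⟩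
      · rintro ⟨e, ⟨he, -⟩, rfl⟩
        exact ⟨⟨mul_dvd_mul_left l he, hn.ne_zero⟩, dvd_mul_right l e⟩
    calc ∑ d ∈ (l * m).divisors with l ∣ d, moebius d = ∑ e ∈ m.divisors, moebius (l * e) := by
          rw [himage, sum_image fun _ _ _ _ h ↦ Nat.eq_of_mul_eq_mul_left
            (Nat.pos_of_ne_zero hl0) h]
      _ = moebius l * ∑ e ∈ m.divisors, moebius e := by
          rw [mul_sum]
          refine sum_congr rfl fun e he ↦ isMultiplicative_moebius.map_mul_of_coprime ?_
          exact (Nat.coprime_of_squarefree_mul hn).coprime_dvd_right (Nat.dvd_of_mem_divisors he)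
      _ = if l = l * m then moebius (l * m) else 0 := by
          rw [← coe_mul_zeta_apply, moebius_mul_coe_zeta, one_apply]
          by_cases hm : m = 1
          · simp [hm]
          · rw [if_neg hm, mul_zero, if_neg (by simpa [eq_comm, hl0] using hm)]
  · rw [if_neg (by rintro rfl; exact hl dvd_rfl), filter_false_of_mem, sum_empty]
    exact fun d hd hld ↦ hl (hld.trans (Nat.dvd_of_mem_divisors hd))

theorem gcd_div_of_squarefree {k d l : ℕ} (hl : Squarefree l) (hkd : k ∣ d) (hdl : d ∣ l) :
    (l / k).gcd d = d / k := by
  obtain ⟨e, rfl⟩ := hkd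
  obtain ⟨f, rfl⟩ := hdl
  have hk : 0 < k := Nat.pos_of_ne_zero fun h ↦ hl.ne_zero (by simp [h])
  have hcop : k.Coprime (e * f) := Nat.coprime_of_squarefree_mul (by rwa [← mul_assoc])
  have hgcd : f.gcd k = 1 := hcop.symm.coprime_dvd_left (dvd_mul_left f e)
  rw [mul_assoc, Nat.mul_div_cancel_left _ hk, Nat.mul_div_cancel_left _ hk, mul_comm k e,
    Nat.gcd_mul_left, hgcd, mul_one]

variable {s : BoundingSieve} {D : Finset ℕ}

theorem nu_le_selbergTerms {d : ℕ} (hd : d ∣ s.prodPrimes) : s.nu d ≤ s.selbergTerms d := by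
  have hfactor : ∀ p ∈ d.primeFactors, 1 ≤ (1 - s.nu p)⁻¹ := fun p hp ↦ by
    have hprime := Nat.prime_of_mem_primeFactors hp
    have hdvd := (Nat.dvd_of_mem_primeFactors hp).trans hd
    have hpos := s.nu_pos_of_prime p hprime hdvd
    have hlt := s.nu_lt_one_of_prime p hprime hdvd
    exact (one_le_inv₀ (by linarith)).mpr (by linarith)
  rw [BoundingSieve.selbergTerms_apply]
  refine le_mul_of_one_le_right (BoundingSieve.nu_pos_of_dvd_prodPrimes hd).le ?_
  simpa using prod_le_prod (fun _ _ ↦ zero_le_one) hfactor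

variable (s D) in
/-- The sum `S = ∑ g(l)` of the Selberg terms over the support `D` of the sieve weights; its
inverse is the main term of the sieve bound. -/
noncomputable def selbergSum : ℝ := ∑ l ∈ D, s.selbergTerms l

variable (s D) in
/-- The optimal Selberg weights `λ_d = (μ(d) / (ν(d) S)) ∑_{l ∈ D, d ∣ l} g(l)`, supported on a
finite set `D` of admissible divisors (classically `d ≤ √y`). -/
noncomputable def selbergWeight (d : ℕ) : ℝ :=
  moebius d / s.nu d * (∑ l ∈ D with d ∣ l, s.selbergTerms l) / selbergSum s D

theorem selbergSum_pos (hD : D ⊆ s.prodPrimes.divisors) (hone : 1 ∈ D) : 0 < selbergSum s D :=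
  sum_pos (fun _ hl ↦ BoundingSieve.selbergTerms_pos (Nat.dvd_of_mem_divisors (hD hl))) ⟨1, hone⟩

theorem selbergWeight_one (hD : D ⊆ s.prodPrimes.divisors) (hone : 1 ∈ D) :
    selbergWeight s D 1 = 1 := by
  have hS : selbergSum s D ≠ 0 := (selbergSum_pos hD hone).ne'
  simpa [selbergWeight, s.nu_mult.map_one, selbergSum] using div_self hS

theorem selbergWeight_eq_zero_of_notMem (hDdvd : ∀ l ∈ D, ∀ d, d ∣ l → d ∈ D) {d : ℕ}
    (hd : d ∉ D) : selbergWeight s D d = 0 := by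
  have hempty : {l ∈ D | d ∣ l} = ∅ :=
    filter_eq_empty_iff.mpr fun l hl hdl ↦ hd (hDdvd l hl d hdl)
  simp [selbergWeight, hempty]

theorem selbergTerms_div {k l : ℕ} (hl : l ∣ s.prodPrimes) (hk : k ∣ l) :
    s.selbergTerms (l / k) = (s.selbergTerms k)⁻¹ * s.selbergTerms l := by
  have hsq := BoundingSieve.squarefree_of_dvd_prodPrimes hl
  rw [BoundingSieve.selbergTerms_isMultiplicative.map_div_of_coprime hk, div_eq_inv_mul]
  · exact Nat.coprime_of_squarefree_mul ((Nat.div_mul_cancel hk).symm ▸ hsq)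
  · exact (BoundingSieve.selbergTerms_pos (hk.trans hl)).ne'

theorem nu_inv_mul_sum_selbergTerms_le (hD : D ⊆ s.prodPrimes.divisors)
    (hDdvd : ∀ l ∈ D, ∀ d, d ∣ l → d ∈ D) {d : ℕ} (hd : d ∣ s.prodPrimes) :
    (s.nu d)⁻¹ * ∑ l ∈ D with d ∣ l, s.selbergTerms l ≤ selbergSum s D := by
  have hdvd {l : ℕ} (hl : l ∈ D) : l ∣ s.prodPrimes := Nat.dvd_of_mem_divisors (hD hl)
  have hinj : Set.InjOn (fun q : ℕ × ℕ ↦ q.2 / q.1) ↑(d.divisors ×ˢ {l ∈ D | d ∣ l}) := by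
    rintro ⟨k, l⟩ hq ⟨k', l'⟩ hq' (hquot : l / k = l' / k')
    simp only [coe_product, Set.mem_prod, mem_coe, Nat.mem_divisors, mem_filter] at hq hq'
    obtain ⟨⟨hk, hd0⟩, hl, hdl⟩ := hq
    obtain ⟨⟨hk', -⟩, hl', hdl'⟩ := hq'
    have hdiv : d / k = d / k' := by
      rw [← gcd_div_of_squarefree (BoundingSieve.squarefree_of_dvd_prodPrimes (hdvd hl)) hk hdl,
        ← gcd_div_of_squarefree (BoundingSieve.squarefree_of_dvd_prodPrimes (hdvd hl')) hk' hdl',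
        hquot]
    obtain rfl : k = k' := by
      rw [← Nat.div_div_self hk hd0, hdiv, Nat.div_div_self hk' hd0]
    rw [← Nat.div_mul_cancel (hk.trans hdl), hquot, Nat.div_mul_cancel (hk.trans hdl')]
  calc (s.nu d)⁻¹ * ∑ l ∈ D with d ∣ l, s.selbergTerms l
      = ∑ q ∈ d.divisors ×ˢ {l ∈ D | d ∣ l}, s.selbergTerms (q.2 / q.1) := by
        rw [BoundingSieve.nu_inv_eq_sum_divisors_inv_selbergTerms hd, ← sum_filter,
          Nat.divisors_filter_dvd_of_dvd BoundingSieve.prodPrimes_ne_zero hd, sum_mul_sum,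
          ← sum_product']
        refine sum_congr rfl fun q hq ↦ (selbergTerms_div ?_ ?_).symm
        · exact hdvd (mem_filter.mp (mem_product.mp hq).2).1
        · exact (Nat.dvd_of_mem_divisors (mem_product.mp hq).1).trans
            (mem_filter.mp (mem_product.mp hq).2).2
    _ = ∑ l ∈ (d.divisors ×ˢ {l ∈ D | d ∣ l}).image fun q ↦ q.2 / q.1, s.selbergTerms l :=
        (sum_image hinj).symm
    _ ≤ selbergSum s D := by
        refine sum_le_sum_of_subset_of_nonneg (image_subset_iff.mpr fun q hq ↦ ?_)
          fun l hl _ ↦ (BoundingSieve.selbergTerms_pos (hdvd hl)).le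
        obtain ⟨hk, hl⟩ := mem_product.mp hq
        obtain ⟨hl, hdl⟩ := mem_filter.mp hl
        exact hDdvd _ hl _ (Nat.div_dvd_of_dvd ((Nat.dvd_of_mem_divisors hk).trans hdl))

theorem abs_selbergWeight_le_one (hD : D ⊆ s.prodPrimes.divisors)
    (hDdvd : ∀ l ∈ D, ∀ d, d ∣ l → d ∈ D) (hone : 1 ∈ D) {d : ℕ} (hd : d ∣ s.prodPrimes) :
    |selbergWeight s D d| ≤ 1 := by
  have hS := selbergSum_pos hD hone
  have hν := BoundingSieve.nu_pos_of_dvd_prodPrimes hd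
  have hsum : 0 ≤ ∑ l ∈ D with d ∣ l, s.selbergTerms l := sum_nonneg fun l hl ↦
    (BoundingSieve.selbergTerms_pos (Nat.dvd_of_mem_divisors (hD (mem_filter.mp hl).1))).le
  have hμ : |(moebius d : ℝ)| ≤ 1 := mod_cast abs_moebius_le_one
  calc |selbergWeight s D d|
      = |(moebius d : ℝ)| *
          ((s.nu d)⁻¹ * ∑ l ∈ D with d ∣ l, s.selbergTerms l) / selbergSum s D := by
        rw [selbergWeight, abs_div, abs_mul, abs_div, abs_of_pos hS, abs_of_pos hν,
          abs_of_nonneg hsum, div_eq_mul_inv _ (s.nu d), mul_assoc]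
    _ ≤ 1 * selbergSum s D / selbergSum s D := by
        gcongr
        exact nu_inv_mul_sum_selbergTerms_le hD hDdvd hd
    _ = 1 := by rw [one_mul, div_self hS.ne']

/-- The change of variables that diagonalises the quadratic form of the `Λ²` sieve. -/
theorem sum_nu_mul_selbergWeight (hD : D ⊆ s.prodPrimes.divisors) (l : ℕ) :
    ∑ d ∈ s.prodPrimes.divisors with l ∣ d, s.nu d * selbergWeight s D d =
      if l ∈ D then moebius l * s.selbergTerms l / selbergSum s D else 0 := by
  have hdvd {m : ℕ} (hm : m ∈ D) : m ∣ s.prodPrimes := Nat.dvd_of_mem_divisors (hD hm)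
  calc ∑ d ∈ s.prodPrimes.divisors with l ∣ d, s.nu d * selbergWeight s D d
      = ∑ d ∈ s.prodPrimes.divisors with l ∣ d, ∑ m ∈ D with d ∣ m,
          moebius d * (s.selbergTerms m / selbergSum s D) := by
        refine sum_congr rfl fun d hd ↦ ?_
        have hν := BoundingSieve.nu_ne_zero (Nat.dvd_of_mem_divisors (mem_filter.mp hd).1)
        rw [selbergWeight, ← mul_sum, ← sum_div]
        field_simp
    _ = ∑ m ∈ D, ∑ d ∈ m.divisors with l ∣ d,
          moebius d * (s.selbergTerms m / selbergSum s D) := by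
        refine sum_comm' fun d m ↦ ?_
        simp only [mem_filter, Nat.mem_divisors]
        exact ⟨fun h ↦ ⟨⟨⟨h.2.2, ne_zero_of_dvd_ne_zero BoundingSieve.prodPrimes_ne_zero
            (hdvd h.2.1)⟩, h.1.2⟩, h.2.1⟩,
          fun h ↦ ⟨⟨⟨h.1.1.1.trans (hdvd h.2), BoundingSieve.prodPrimes_ne_zero⟩, h.1.2⟩, h.2,
            h.1.1.1⟩⟩
    _ = ∑ m ∈ D, if l = m then moebius m * (s.selbergTerms m / selbergSum s D) else 0 := by
        refine sum_congr rfl fun m hm ↦ ?_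
        have hμ := sum_divisors_filter_dvd_moebius
          (BoundingSieve.squarefree_of_dvd_prodPrimes (hdvd hm)) l
        rw [← sum_mul, ← Int.cast_sum, hμ]
        split_ifs <;> simp
    _ = _ := by simp [mul_div_assoc]

theorem mainSum_lambdaSquared_selbergWeight (hD : D ⊆ s.prodPrimes.divisors) (hone : 1 ∈ D) :
    s.mainSum (BoundingSieve.lambdaSquared (selbergWeight s D)) = (selbergSum s D)⁻¹ := by
  have hS := (selbergSum_pos hD hone).ne'
  calc s.mainSum (BoundingSieve.lambdaSquared (selbergWeight s D))
      = ∑ l ∈ s.prodPrimes.divisors,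
          if l ∈ D then s.selbergTerms l / selbergSum s D ^ 2 else 0 := by
        rw [BoundingSieve.mainSum_lambdaSquared_eq_sum_mul_sum_sq]
        refine sum_congr rfl fun l hl ↦ ?_
        have hl := Nat.dvd_of_mem_divisors hl
        have hg := (BoundingSieve.selbergTerms_pos hl).ne'
        have hμ : (moebius l : ℝ) ^ 2 = 1 := mod_cast moebius_sq_eq_one_of_squarefree
          (BoundingSieve.squarefree_of_dvd_prodPrimes hl)
        rw [← sum_filter, sum_nu_mul_selbergWeight hD]
        split_ifs
        · rw [div_pow, mul_pow, hμ]
          field_simp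
        · simp
    _ = (∑ l ∈ D, s.selbergTerms l) / selbergSum s D ^ 2 := by
        rw [← sum_filter, filter_mem_eq_inter, inter_eq_right.mpr hD, sum_div]
    _ = (selbergSum s D)⁻¹ := by
        rw [← selbergSum]
        field_simp

theorem abs_lambdaSquared_le_card {w : ℕ → ℝ} (hw : ∀ d ∉ D, w d = 0) (hw' : ∀ d ∈ D, |w d| ≤ 1)
    (d : ℕ) :
    |BoundingSieve.lambdaSquared w d| ≤ #{q ∈ D ×ˢ D | q.1.lcm q.2 = d} := by
  have hterm (q : ℕ × ℕ) : |w q.1 * w q.2| ≤ if q ∈ D ×ˢ D then 1 else 0 := by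
    by_cases h₁ : q.1 ∈ D
    · by_cases h₂ : q.2 ∈ D
      · simpa [h₁, h₂, abs_mul] using mul_le_one₀ (hw' _ h₁) (abs_nonneg _) (hw' _ h₂)
      · simp [h₂, hw _ h₂]
    · simp [h₁, hw _ h₁]
  calc |BoundingSieve.lambdaSquared w d|
      = |∑ q ∈ d.divisors ×ˢ d.divisors with d = q.1.lcm q.2, w q.1 * w q.2| := by
        rw [BoundingSieve.lambdaSquared, sum_filter, sum_product]
    _ ≤ ∑ q ∈ d.divisors ×ˢ d.divisors with d = q.1.lcm q.2, if q ∈ D ×ˢ D then 1 else 0 :=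
        (abs_sum_le_sum_abs _ _).trans (sum_le_sum fun q _ ↦ hterm q)
    _ ≤ #{q ∈ D ×ˢ D | q.1.lcm q.2 = d} := by
        rw [sum_boole]
        refine mod_cast card_le_card fun q hq ↦ ?_
        rw [mem_filter, mem_filter] at hq
        exact mem_filter.mpr ⟨hq.2, hq.1.2.symm⟩

theorem errSum_lambdaSquared_le {w : ℕ → ℝ} (hD : D ⊆ s.prodPrimes.divisors)
    (hw : ∀ d ∉ D, w d = 0) (hw' : ∀ d ∈ D, |w d| ≤ 1) :
    s.errSum (BoundingSieve.lambdaSquared w) ≤ ∑ d ∈ D, ∑ e ∈ D, |s.rem (d.lcm e)| := by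
  have hmaps : ∀ q ∈ D ×ˢ D, q.1.lcm q.2 ∈ s.prodPrimes.divisors := fun q hq ↦ by
    obtain ⟨h₁, h₂⟩ := mem_product.mp hq
    exact Nat.mem_divisors.mpr ⟨Nat.lcm_dvd (Nat.dvd_of_mem_divisors (hD h₁))
      (Nat.dvd_of_mem_divisors (hD h₂)), BoundingSieve.prodPrimes_ne_zero⟩
  calc s.errSum (BoundingSieve.lambdaSquared w)
      ≤ ∑ d ∈ s.prodPrimes.divisors, #{q ∈ D ×ˢ D | q.1.lcm q.2 = d} * |s.rem d| := by
        refine sum_le_sum fun d _ ↦ ?_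
        gcongr
        exact abs_lambdaSquared_le_card hw hw' d
    _ = ∑ q ∈ D ×ˢ D, |s.rem (q.1.lcm q.2)| := by
        simp only [← nsmul_eq_mul, ← sum_const]
        exact sum_fiberwise_of_maps_to' hmaps fun d ↦ |s.rem d|
    _ = ∑ d ∈ D, ∑ e ∈ D, |s.rem (d.lcm e)| := sum_product ..

theorem siftedSum_le_totalMass_div_selbergSum_add (hD : D ⊆ s.prodPrimes.divisors)
    (hDdvd : ∀ l ∈ D, ∀ d, d ∣ l → d ∈ D) (hone : 1 ∈ D) :
    s.siftedSum ≤ s.totalMass / selbergSum s D + ∑ d ∈ D, ∑ e ∈ D, |s.rem (d.lcm e)| := by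
  set w := selbergWeight s D
  calc s.siftedSum ≤ s.totalMass * s.mainSum (BoundingSieve.lambdaSquared w) +
        s.errSum (BoundingSieve.lambdaSquared w) :=
        BoundingSieve.siftedSum_le_mainSum_errSum_of_upperMoebius _
          (BoundingSieve.upperMoebius_lambdaSquared w (selbergWeight_one hD hone))
    _ ≤ _ := by
        rw [mainSum_lambdaSquared_selbergWeight hD hone, ← div_eq_mul_inv]
        gcongr
        exact errSum_lambdaSquared_le hD (fun d ↦ selbergWeight_eq_zero_of_notMem hDdvd)
          fun d hd ↦ abs_selbergWeight_le_one hD hDdvd hone (Nat.dvd_of_mem_divisors (hD hd))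

end Sieve

section Interval

variable {a b m : ℕ}

theorem abs_card_Ioc_filter_dvd_sub_le_one (hab : a ≤ b) (hm : 0 < m) :
    |(#{n ∈ Ioc a b | m ∣ n} : ℝ) - (m : ℝ)⁻¹ * (b - a)| ≤ 1 := by
  have hmono : (a / m : ℕ) ≤ b / m := Nat.div_le_div_right hab
  have hcard : #{n ∈ Ioc a b | m ∣ n} = b / m - a / m := by
    have h := Nat.Ioc_filter_modEq_card a b hm 0
    simp only [Nat.modEq_zero_iff_dvd, Nat.cast_zero, sub_zero, Rat.floor_natCast_div_natCast] at h
    omega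
  have hfloor (c : ℕ) : ((c / m : ℕ) : ℝ) ≤ c / m ∧ (c / m : ℝ) < (c / m : ℕ) + 1 := by
    rw [← Nat.floor_div_eq_div (K := ℝ)]
    exact ⟨Nat.floor_le (by positivity), Nat.lt_floor_add_one _⟩
  obtain ⟨ha, ha'⟩ := hfloor a
  obtain ⟨hb, hb'⟩ := hfloor b
  have hsub : (m : ℝ)⁻¹ * (b - a) = b / m - a / m := by ring
  rw [hcard, Nat.cast_sub hmono, hsub, abs_le]
  constructor <;> linarith

/-- The sieve problem of removing from `(a, b]` the multiples of the primes dividing `P`. -/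
noncomputable def intervalSieve (a b : ℕ) {P : ℕ} (hP : Squarefree P) : BoundingSieve where
  support := Ioc a b
  prodPrimes := P
  prodPrimes_squarefree := hP
  weights _ := 1
  weights_nonneg _ := zero_le_one
  totalMass := b - a
  nu := ⟨fun n ↦ (n : ℝ)⁻¹, by simp⟩
  nu_mult := ⟨by simp, fun {m n} _ ↦ by simp [mul_comm]⟩
  nu_pos_of_prime p hp _ := inv_pos.mpr (mod_cast hp.pos)
  nu_lt_one_of_prime p hp _ := inv_lt_one_of_one_lt₀ (mod_cast hp.one_lt)

theorem card_Ioc_filter_coprime_le {P : ℕ} (hP : Squarefree P) {D : Finset ℕ} (hab : a ≤ b)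
    (hD : D ⊆ P.divisors) (hDdvd : ∀ l ∈ D, ∀ d, d ∣ l → d ∈ D) (hone : 1 ∈ D) :
    (#{n ∈ Ioc a b | P.Coprime n} : ℝ) ≤ (b - a) / ∑ d ∈ D, (d : ℝ)⁻¹ + #D ^ 2 := by
  have hrem : ∀ d ∈ D, ∀ e ∈ D, |(intervalSieve a b hP).rem (d.lcm e)| ≤ 1 := fun d hd e he ↦ by
    have hlcm : 0 < d.lcm e := Nat.lcm_pos (Nat.pos_of_mem_divisors (hD hd))
      (Nat.pos_of_mem_divisors (hD he))
    simpa [intervalSieve] using abs_card_Ioc_filter_dvd_sub_le_one hab hlcm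
  have hsum : ∑ d ∈ D, (d : ℝ)⁻¹ ≤ selbergSum (intervalSieve a b hP) D :=
    sum_le_sum fun d hd ↦ nu_le_selbergTerms (s := intervalSieve a b hP)
      (Nat.dvd_of_mem_divisors (hD hd))
  have hpos : 0 < ∑ d ∈ D, (d : ℝ)⁻¹ := sum_pos
    (fun d hd ↦ inv_pos.mpr (mod_cast Nat.pos_of_mem_divisors (hD hd))) ⟨1, hone⟩
  have hab : (0 : ℝ) ≤ b - a := sub_nonneg.mpr (mod_cast hab)
  calc (#{n ∈ Ioc a b | P.Coprime n} : ℝ) = (intervalSieve a b hP).siftedSum := by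
        rw [BoundingSieve.siftedSum, card_filter]
        push_cast
        rfl
    _ ≤ (b - a) / selbergSum (intervalSieve a b hP) D +
          ∑ d ∈ D, ∑ e ∈ D, |(intervalSieve a b hP).rem (d.lcm e)| :=
        siftedSum_le_totalMass_div_selbergSum_add hD hDdvd hone
    _ ≤ (b - a) / ∑ d ∈ D, (d : ℝ)⁻¹ + ∑ d ∈ D, ∑ e ∈ D, 1 := by
        gcongr with d hd e he
        exact hrem d hd e he
    _ = _ := by simp [sq]

theorem log_le_two_mul_sum_inv_squarefree (N : ℕ) :
    Real.log (N + 1) ≤ 2 * ∑ d ∈ Icc 1 N with Squarefree d, (d : ℝ)⁻¹ := by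
  have hcover : Icc 1 N ⊆ (Icc 1 N ×ˢ {d ∈ Icc 1 N | Squarefree d}).image
      fun q ↦ q.1 ^ 2 * q.2 := fun n hn ↦ by
    obtain ⟨hn0, hnN⟩ := mem_Icc.mp hn
    obtain ⟨d, c, rfl, hd⟩ := Nat.sq_mul_squarefree n
    have mem_Icc_of_dvd {k : ℕ} (hk : k ∣ c ^ 2 * d) : k ∈ Icc 1 N :=
      mem_Icc.mpr ⟨Nat.pos_of_dvd_of_pos hk hn0, (Nat.le_of_dvd hn0 hk).trans hnN⟩
    refine mem_image.mpr ⟨(c, d), mem_product.mpr ⟨?_, mem_filter.mpr ⟨?_, hd⟩⟩, rfl⟩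
    · exact mem_Icc_of_dvd ((dvd_pow_self c two_ne_zero).mul_right d)
    · exact mem_Icc_of_dvd (dvd_mul_left d _)
  calc Real.log (N + 1) ≤ ∑ n ∈ Icc 1 N, (n : ℝ)⁻¹ := by
        simpa [harmonic_eq_sum_Icc] using log_add_one_le_harmonic N
    _ ≤ ∑ q ∈ Icc 1 N ×ˢ {d ∈ Icc 1 N | Squarefree d}, ((q.1 ^ 2 * q.2 : ℕ) : ℝ)⁻¹ :=
        (sum_le_sum_of_subset_of_nonneg hcover fun _ _ _ ↦ by positivity).trans
          (sum_image_le_of_nonneg fun _ _ ↦ by positivity)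
    _ = (∑ c ∈ Icc 1 N, ((c : ℝ) ^ 2)⁻¹) * ∑ d ∈ Icc 1 N with Squarefree d, (d : ℝ)⁻¹ := by
        rw [sum_mul_sum, sum_product]
        push_cast
        simp only [mul_inv]
    _ ≤ 2 * ∑ d ∈ Icc 1 N with Squarefree d, (d : ℝ)⁻¹ := by
        have hIoo : Ioo 0 (N + 1) = Icc 1 N := by
          ext
          simp only [mem_Ioo, mem_Icc]
          omega
        gcongr
        simpa [hIoo] using sum_Ioo_inv_sq_le (α := ℝ) 0 (N + 1)

/-- The divisors `d ≤ N` of `N#` are the squarefree numbers up to `N`, which gives a sieve of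
level `N ^ 2`. -/
theorem card_Ioc_filter_coprime_primorial_le {N : ℕ} (hN : 1 ≤ N) (hab : a ≤ b) :
    (#{n ∈ Ioc a b | (primorial N).Coprime n} : ℝ) ≤ 2 * (b - a) / Real.log (N + 1) + N ^ 2 := by
  set D := {d ∈ Icc 1 N | Squarefree d}
  have hD : D ⊆ (primorial N).divisors := fun d hd ↦ by
    obtain ⟨hd, hsq⟩ := mem_filter.mp hd
    exact Nat.mem_divisors.mpr ⟨hsq.dvd_primorial.trans (primorial_dvd_primorial (mem_Icc.mp hd).2),
      primorial_ne_zero N⟩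
  have hDdvd : ∀ l ∈ D, ∀ d, d ∣ l → d ∈ D := fun l hl d hdl ↦ by
    obtain ⟨hl, hsq⟩ := mem_filter.mp hl
    obtain ⟨hl0, hlN⟩ := mem_Icc.mp hl
    exact mem_filter.mpr ⟨mem_Icc.mpr ⟨Nat.pos_of_dvd_of_pos hdl hl0,
      (Nat.le_of_dvd hl0 hdl).trans hlN⟩, hsq.squarefree_of_dvd hdl⟩
  have hone : 1 ∈ D := by simp [D, hN]
  have hcard : #D ≤ N := (card_filter_le _ _).trans (by simp)
  have hlog : 0 < Real.log (N + 1) := Real.log_pos (by norm_cast; omega)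
  have hab' : (0 : ℝ) ≤ b - a := sub_nonneg.mpr (mod_cast hab)
  calc (#{n ∈ Ioc a b | (primorial N).Coprime n} : ℝ)
      ≤ (b - a) / ∑ d ∈ D, (d : ℝ)⁻¹ + #D ^ 2 :=
        card_Ioc_filter_coprime_le (squarefree_primorial N) hab hD hDdvd hone
    _ ≤ (b - a) / (Real.log (N + 1) / 2) + N ^ 2 := by
        gcongr
        linarith [log_le_two_mul_sum_inv_squarefree N]
    _ = 2 * (b - a) / Real.log (N + 1) + N ^ 2 := by rw [div_div_eq_mul_div, mul_comm (2 : ℝ)]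

end Interval

section PrimePowers

variable {a b k : ℕ}

/-- The prime powers in the interval `(a, b]`. -/
def primePowersIoc (a b : ℕ) : Finset ℕ := {n ∈ Ioc a b | IsPrimePow n}

theorem mem_primePowersIoc {n : ℕ} : n ∈ primePowersIoc a b ↔ (a < n ∧ n ≤ b) ∧ IsPrimePow n := by
  rw [primePowersIoc, mem_filter, mem_Ioc]

/-- Two powers of the same prime differ at least by a factor `2`. -/
theorem injOn_minFac_primePowersIoc (hb : b ≤ 2 * a + 1) :
    Set.InjOn Nat.minFac ↑(primePowersIoc a b) := by
  have not_lt {n n' : ℕ} (hn : n ∈ primePowersIoc a b) (hn' : n' ∈ primePowersIoc a b)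
      (hmin : n.minFac = n'.minFac) : ¬n < n' := fun hlt ↦ by
    obtain ⟨⟨han, -⟩, hpp⟩ := mem_primePowersIoc.mp hn
    obtain ⟨⟨-, hn'b⟩, hpp'⟩ := mem_primePowersIoc.mp hn'
    have hp := Nat.minFac_prime hpp.one_lt.ne'
    have hpow := hpp.minFac_pow_factorization_eq
    have hpow' := hpp'.minFac_pow_factorization_eq
    rw [← hmin] at hpow'
    have hexp := (Nat.pow_lt_pow_iff_right hp.one_lt).mp (hpow'.symm ▸ hpow.symm ▸ hlt)
    have hdvd := Nat.pow_dvd_pow n.minFac (Nat.succ_le_of_lt hexp)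
    have hle : n * n.minFac ≤ n' := by
      rw [pow_succ, hpow, hpow'] at hdvd
      exact Nat.le_of_dvd hpp'.pos hdvd
    have htwo : n * 2 ≤ n * n.minFac := Nat.mul_le_mul_left n hp.two_le
    omega
  exact fun n hn n' hn' hmin ↦ (le_of_not_gt (not_lt hn' hn hmin.symm)).antisymm
    (le_of_not_gt (not_lt hn hn' hmin))

/-- A prime power is either coprime to `N#`, or a power of one of the at most `N` primes up to `N`,
and each of these has at most one power in `(a, b]`. -/
theorem card_primePowersIoc_le {N : ℕ} (hN : 1 ≤ N) (hab : a ≤ b) (hb : b ≤ 2 * a + 1) :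
    (#(primePowersIoc a b) : ℝ) ≤ 2 * (b - a) / Real.log (N + 1) + N ^ 2 + N := by
  have hsmall : #{n ∈ primePowersIoc a b | n.minFac ≤ N} ≤ N := by
    have hmaps : Set.MapsTo Nat.minFac ↑{n ∈ primePowersIoc a b | n.minFac ≤ N} ↑(Icc 1 N) :=
      fun n hn ↦ by simpa [Nat.minFac_pos, Nat.succ_le_iff] using (mem_filter.mp hn).2
    simpa using card_le_card_of_injOn _ hmaps
      ((injOn_minFac_primePowersIoc hb).mono (filter_subset _ _))
  have hlarge : {n ∈ primePowersIoc a b | ¬n.minFac ≤ N} ⊆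
      {n ∈ Ioc a b | (primorial N).Coprime n} := fun n hn ↦ by
    obtain ⟨hn, hmin⟩ := mem_filter.mp hn
    refine mem_filter.mpr ⟨(mem_filter.mp hn).1, Nat.coprime_of_dvd fun p hp hpN hpn ↦ hmin ?_⟩
    exact (Nat.minFac_le_of_dvd hp.two_le hpn).trans (hp.dvd_primorial_iff.mp hpN)
  have hsplit := card_filter_add_card_filter_not (s := primePowersIoc a b) (·.minFac ≤ N)
  calc (#(primePowersIoc a b) : ℝ)
      ≤ #{n ∈ Ioc a b | (primorial N).Coprime n} + N := by
        have := card_le_card hlarge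
        norm_cast
        omega
    _ ≤ 2 * (b - a) / Real.log (N + 1) + N ^ 2 + N := by
        gcongr
        exact card_Ioc_filter_coprime_primorial_le hN hab

/-- Bound for the density of prime powers in an interval of length `2 ^ k`, where `m = ⌊k / 3⌋`,
coming from the sieve with `N = 2 ^ m`. As `3 / 0 = 0`, its value at `m = 0` is `2`. -/
noncomputable def primePowerDensity (m : ℕ) : ℝ := 3 / m + 2 * (1 / 2) ^ m

theorem primePowerDensity_nonneg (m : ℕ) : 0 ≤ primePowerDensity m := by
  unfold primePowerDensity
  positivity

theorem sieve_bound_le_two_pow_mul_primePowerDensity {m : ℕ} {y : ℝ} (hm : 0 < m) (hk : 3 * m ≤ k)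
    (hy : y ≤ 2 ^ k) :
    2 * y / Real.log ((2 ^ m : ℕ) + 1) + (2 ^ m : ℕ) ^ 2 + (2 ^ m : ℕ) ≤
      2 ^ k * primePowerDensity m := by
  have hlog : (2 / 3 : ℝ) * m ≤ Real.log ((2 ^ m : ℕ) + 1) := calc
    (2 / 3 : ℝ) * m ≤ Real.log 2 * m := by
      gcongr
      linarith [Real.log_two_gt_d9]
    _ = Real.log (2 ^ m) := by rw [Real.log_pow, mul_comm]
    _ ≤ Real.log ((2 ^ m : ℕ) + 1) := by
      push_cast
      gcongr
      linarith
  have hlevel : ((2 ^ m : ℕ) : ℝ) ^ 2 + (2 ^ m : ℕ) ≤ 2 ^ k * (2 * (1 / 2) ^ m) := calc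
    ((2 ^ m : ℕ) : ℝ) ^ 2 + (2 ^ m : ℕ) ≤ 4 ^ m + 4 ^ m := by
      push_cast
      rw [← pow_mul, mul_comm m 2, pow_mul]
      gcongr <;> norm_num
    _ = 2 ^ (3 * m) * (2 * (1 / 2) ^ m) := by
      rw [pow_mul, mul_left_comm, ← mul_pow]
      norm_num [two_mul]
    _ ≤ 2 ^ k * (2 * (1 / 2) ^ m) := by
      gcongr
      norm_num
  calc 2 * y / Real.log ((2 ^ m : ℕ) + 1) + (2 ^ m : ℕ) ^ 2 + (2 ^ m : ℕ)
      ≤ 2 * 2 ^ k / (2 / 3 * m) + 2 ^ k * (2 * (1 / 2) ^ m) := by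
        rw [add_assoc]
        gcongr
    _ = 2 ^ k * primePowerDensity m := by
        rw [primePowerDensity]
        ring

theorem card_primePowersIoc_le_two_pow (hb : b ≤ 2 * a + 1) (hk : b ≤ a + 2 ^ k) :
    (#(primePowersIoc a b) : ℝ) ≤ 2 ^ k * primePowerDensity (k / 3) := by
  have htrivial : #(primePowersIoc a b) ≤ b - a := (card_filter_le _ _).trans (by simp)
  rcases lt_or_ge b a with hba | hab
  · rw [show #(primePowersIoc a b) = 0 by omega, Nat.cast_zero]
    exact mul_nonneg (by positivity) (primePowerDensity_nonneg _)
  have hlen : (b : ℝ) - a ≤ 2 ^ k := by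
    rw [sub_le_iff_le_add']
    exact_mod_cast hk
  obtain hk0 | hk0 := (k / 3).eq_zero_or_pos
  · have hcard : (#(primePowersIoc a b) : ℝ) ≤ 2 ^ k :=
      mod_cast htrivial.trans (Nat.sub_le_iff_le_add'.mpr hk)
    simpa [primePowerDensity, hk0] using
      hcard.trans (le_mul_of_one_le_right (by positivity) one_le_two)
  · exact (card_primePowersIoc_le Nat.one_le_two_pow hab hb).trans
      (sieve_bound_le_two_pow_mul_primePowerDensity hk0 (Nat.mul_div_le k 3) hlen)

theorem sum_range_mul_div {M : Type*} [AddCommMonoid M] (f : ℕ → M) {d : ℕ} (hd : 0 < d) (q : ℕ) :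
    ∑ k ∈ range (d * q), f (k / d) = d • ∑ m ∈ range q, f m := by
  induction q with
  | zero => simp
  | succ q ih =>
    have hblock : ∑ k ∈ range d, f ((d * q + k) / d) = d • f q := by
      rw [← card_range d, ← sum_const, card_range]
      refine sum_congr rfl fun k hk ↦ ?_
      rw [Nat.mul_add_div hd, Nat.div_eq_of_lt (mem_range.mp hk), add_zero]
    rw [mul_add_one, sum_range_add, ih, hblock, sum_range_succ, smul_add]

theorem sum_primePowerDensity_le (q : ℕ) :
    ∑ m ∈ range (q + 1), primePowerDensity m ≤ 3 * harmonic q + 4 := by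
  have hgeom : ∑ m ∈ range (q + 1), (1 / 2 : ℝ) ^ m ≤ 2 :=
    (summable_geometric_two.sum_le_tsum _ fun _ _ ↦ by positivity).trans_eq tsum_geometric_two
  have hharm : ∑ m ∈ range (q + 1), 3 / (m : ℝ) = 3 * harmonic q := by
    rw [sum_range_succ', harmonic, Rat.cast_sum, mul_sum]
    simp [div_eq_mul_inv]
  calc ∑ m ∈ range (q + 1), primePowerDensity m
      = 3 * harmonic q + 2 * ∑ m ∈ range (q + 1), (1 / 2 : ℝ) ^ m := by
        simp only [primePowerDensity, sum_add_distrib, ← mul_sum, hharm]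
    _ ≤ 3 * harmonic q + 4 := by linarith

theorem sum_primePowerDensity_div_three_le (M : ℕ) :
    ∑ k ∈ range (M + 1), primePowerDensity (k / 3) ≤ 9 * harmonic (M / 3) + 12 := calc
  ∑ k ∈ range (M + 1), primePowerDensity (k / 3)
    ≤ ∑ k ∈ range (3 * (M / 3 + 1)), primePowerDensity (k / 3) :=
      sum_le_sum_of_subset_of_nonneg (range_subset_range.mpr (by omega))
        fun _ _ _ ↦ primePowerDensity_nonneg _
  _ = 3 * ∑ m ∈ range (M / 3 + 1), primePowerDensity m := by
      rw [sum_range_mul_div _ three_pos, nsmul_eq_mul, Nat.cast_ofNat]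
  _ ≤ 9 * harmonic (M / 3) + 12 := by linarith [sum_primePowerDensity_le (M / 3)]

end PrimePowers

section Dyadic

theorem sum_inv_add_half_le {ι : Type*} {B : Finset ι} {j : ι → ℕ} (hj : Set.InjOn j ↑B) {K : ℕ}
    (hK : ∀ n ∈ B, j n < 2 ^ K) :
    ∑ n ∈ B, ((j n : ℝ) + 1 / 2)⁻¹ ≤
      2 + ∑ k ∈ range K, (#{n ∈ B | 2 ^ k ≤ j n ∧ j n < 2 ^ (k + 1)} : ℝ) / 2 ^ k := by
  have hterm : ∀ n ∈ B, ((j n : ℝ) + 1 / 2)⁻¹ ≤ (if j n = 0 then 2 else 0) +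
      ∑ k ∈ range K, if 2 ^ k ≤ j n ∧ j n < 2 ^ (k + 1) then ((2 : ℝ) ^ k)⁻¹ else 0 := fun n hn ↦ by
    have hnonneg : ∀ k ∈ range K,
        (0 : ℝ) ≤ if 2 ^ k ≤ j n ∧ j n < 2 ^ (k + 1) then ((2 : ℝ) ^ k)⁻¹ else 0 :=
      fun k _ ↦ by positivity
    by_cases h0 : j n = 0
    · simp [h0]
    set k := Nat.log 2 (j n)
    have hk : 2 ^ k ≤ j n := Nat.pow_log_le_self 2 h0
    have hk' : j n < 2 ^ (k + 1) := Nat.lt_pow_succ_log_self one_lt_two _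
    have hkK : k ∈ range K :=
      mem_range.mpr ((Nat.pow_lt_pow_iff_right one_lt_two).mp (hk.trans_lt (hK n hn)))
    calc ((j n : ℝ) + 1 / 2)⁻¹ ≤ ((2 : ℝ) ^ k)⁻¹ := by
          gcongr
          have : ((2 ^ k : ℕ) : ℝ) ≤ j n := mod_cast hk
          push_cast at this
          linarith
      _ ≤ _ := by
          rw [if_neg h0, zero_add]
          simpa [hk, hk'] using single_le_sum hnonneg hkK
  have hzero : #{n ∈ B | j n = 0} ≤ 1 := card_le_one.mpr fun n hn n' hn' ↦
    hj (mem_filter.mp hn).1 (mem_filter.mp hn').1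
      ((mem_filter.mp hn).2.trans (mem_filter.mp hn').2.symm)
  refine (sum_le_sum hterm).trans ?_
  rw [sum_add_distrib, sum_comm, ← sum_filter, sum_const, nsmul_eq_mul]
  refine add_le_add ?_ (sum_le_sum fun k _ ↦ ?_)
  · have : (#{n ∈ B | j n = 0} : ℝ) ≤ 1 := mod_cast hzero
    linarith
  · rw [← sum_filter, sum_const, nsmul_eq_mul, div_eq_mul_inv]

theorem sum_inv_add_half_le_of_shells {B : Finset ℕ} {j : ℕ → ℕ} (hj : Set.InjOn j ↑B) {M : ℕ}
    (hM : ∀ n ∈ B, j n < 2 ^ (M + 1))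
    (hB : ∀ k, ∃ a b, b ≤ 2 * a + 1 ∧ b ≤ a + 2 ^ k ∧
      {n ∈ B | 2 ^ k ≤ j n ∧ j n < 2 ^ (k + 1)} ⊆ primePowersIoc a b) :
    ∑ n ∈ B, ((j n : ℝ) + 1 / 2)⁻¹ ≤ 9 * harmonic (M / 3) + 14 := by
  have hshell (k : ℕ) : (#{n ∈ B | 2 ^ k ≤ j n ∧ j n < 2 ^ (k + 1)} : ℝ) / 2 ^ k ≤
      primePowerDensity (k / 3) := by
    obtain ⟨a, b, hb, hk, hsub⟩ := hB k
    rw [div_le_iff₀' (by positivity)]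
    exact (Nat.cast_le.mpr (card_le_card hsub)).trans (card_primePowersIoc_le_two_pow hb hk)
  calc ∑ n ∈ B, ((j n : ℝ) + 1 / 2)⁻¹
      ≤ 2 + ∑ k ∈ range (M + 1), primePowerDensity (k / 3) :=
        (sum_inv_add_half_le hj hM).trans (by gcongr with k; exact hshell k)
    _ ≤ 9 * harmonic (M / 3) + 14 := by linarith [sum_primePowerDensity_div_three_le M]

theorem sum_primePowersIoc_right_le (a : ℕ) :
    ∑ n ∈ primePowersIoc a (2 * a), ((n : ℝ) - (a + 1 / 2))⁻¹ ≤
      9 * harmonic (Nat.log 2 a / 3) + 14 := by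
  have hmem {n : ℕ} (hn : n ∈ primePowersIoc a (2 * a)) : a < n ∧ n ≤ 2 * a :=
    (mem_primePowersIoc.mp hn).1
  have hlog := Nat.lt_pow_succ_log_self one_lt_two a
  calc ∑ n ∈ primePowersIoc a (2 * a), ((n : ℝ) - (a + 1 / 2))⁻¹
      = ∑ n ∈ primePowersIoc a (2 * a), (((n - (a + 1) : ℕ) : ℝ) + 1 / 2)⁻¹ := by
        refine sum_congr rfl fun n hn ↦ ?_
        rw [Nat.cast_sub (hmem hn).1]
        push_cast
        ring
    _ ≤ 9 * harmonic (Nat.log 2 a / 3) + 14 := by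
        refine sum_inv_add_half_le_of_shells (fun n hn n' hn' hnn' ↦ ?_) (fun n hn ↦ ?_)
          fun k ↦ ⟨a + 2 ^ k, a + 2 ^ (k + 1), by omega, by omega, fun n hn ↦ ?_⟩
        · have := hmem hn
          have := hmem hn'
          omega
        · have := hmem hn
          omega
        · obtain ⟨hn, hk⟩ := mem_filter.mp hn
          have := hmem hn
          exact mem_primePowersIoc.mpr ⟨by omega, (mem_primePowersIoc.mp hn).2⟩

theorem sum_primePowersIoc_left_le (a : ℕ) :
    ∑ n ∈ primePowersIoc (a / 2) a, (a + 1 / 2 - (n : ℝ))⁻¹ ≤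
      9 * harmonic (Nat.log 2 a / 3) + 14 := by
  have hmem {n : ℕ} (hn : n ∈ primePowersIoc (a / 2) a) : a / 2 < n ∧ n ≤ a :=
    (mem_primePowersIoc.mp hn).1
  have hlog := Nat.lt_pow_succ_log_self one_lt_two a
  calc ∑ n ∈ primePowersIoc (a / 2) a, (a + 1 / 2 - (n : ℝ))⁻¹
      = ∑ n ∈ primePowersIoc (a / 2) a, (((a - n : ℕ) : ℝ) + 1 / 2)⁻¹ := by
        refine sum_congr rfl fun n hn ↦ ?_
        rw [Nat.cast_sub (hmem hn).2]
        ring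
    _ ≤ 9 * harmonic (Nat.log 2 a / 3) + 14 := by
        refine sum_inv_add_half_le_of_shells (fun n hn n' hn' hnn' ↦ ?_) (fun n hn ↦ ?_)
          fun k ↦ ⟨max (a / 2) (a - 2 ^ (k + 1)), a - 2 ^ k, by omega, by omega, fun n hn ↦ ?_⟩
        · have := hmem hn
          have := hmem hn'
          omega
        · have := hmem hn
          omega
        · obtain ⟨hn, hk⟩ := mem_filter.mp hn
          have := hmem hn
          exact mem_primePowersIoc.mpr ⟨by omega, (mem_primePowersIoc.mp hn).2⟩

/-- The harmonic number of `q` is at most `1 + log q`, and `2 q ≤ log x` for `q = ⌊log₂ a / 3⌋`, so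
that the constant is `1 - log 2 ≤ 0.31`. -/
theorem harmonic_log_div_three_le {a : ℕ} {x : ℝ} (hax : (a : ℝ) ≤ x) (hx : 1 ≤ Real.log x) :
    (harmonic (Nat.log 2 a / 3) : ℝ) ≤ 0.31 + Real.log (Real.log x) := by
  set q := Nat.log 2 a / 3
  obtain hq | hq := q.eq_zero_or_pos
  · rw [hq, harmonic_zero, Rat.cast_zero]
    linarith [Real.log_nonneg hx]
  have ha : a ≠ 0 := by
    rintro rfl
    simp [q] at hq
  have hqR : (0 : ℝ) < q := mod_cast hq
  have hpow : (2 : ℝ) ^ (3 * q) ≤ x := by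
    refine le_trans ?_ hax
    exact_mod_cast (Nat.pow_le_pow_right two_pos (by omega)).trans (Nat.pow_log_le_self 2 ha)
  have htwo : 2 * (q : ℝ) ≤ Real.log x := calc
    2 * (q : ℝ) ≤ 3 * q * Real.log 2 := by nlinarith [Real.log_two_gt_d9]
    _ = Real.log (2 ^ (3 * q)) := by rw [Real.log_pow]; push_cast; rfl
    _ ≤ Real.log x := Real.log_le_log (by positivity) hpow
  have hlog : Real.log 2 + Real.log q ≤ Real.log (Real.log x) := by
    rw [← Real.log_mul two_ne_zero hqR.ne']
    exact Real.log_le_log (by positivity) htwo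
  linarith [harmonic_le_one_add_log q, Real.log_two_gt_d9]

end Dyadic

section Zeta

theorem riemannZeta_ofReal_re_eq_tsum {s : ℝ} (hs : 1 < s) :
    (riemannZeta s).re = ∑' n : ℕ, 1 / ((n : ℝ) + 1) ^ s := by
  rw [zeta_eq_tsum_one_div_nat_add_one_cpow (by simpa using hs), ← Complex.ofReal_re (∑' _, _),
    Complex.ofReal_tsum]
  congr 1
  refine tsum_congr fun n ↦ ?_
  rw [Complex.ofReal_div, Complex.ofReal_one, Complex.ofReal_cpow (by positivity)]
  push_cast
  rfl

theorem riemannZeta_ofReal_re_le {s : ℝ} (hs : 1 < s) :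
    (riemannZeta s).re ≤ 1 + 1 / (s - 1) := by
  have hterm : 0 ≤ ZetaAsymptotics.termTSum s :=
    tsum_nonneg fun n ↦ ZetaAsymptotics.term_nonneg (n + 1) s
  have hzeta := ZetaAsymptotics.zeta_limit_aux1 hs
  rw [← riemannZeta_ofReal_re_eq_tsum hs] at hzeta
  have := mul_nonneg (zero_le_one.trans hs.le) hterm
  linarith

/-- The `n`-th term of the Dirichlet series of `log ζ(s)`; it vanishes at `n = 0` and `n = 1`, where
`Λ n = 0`. -/
noncomputable def logZetaTerm (s : ℝ) (n : ℕ) : ℝ := Λ n / (n ^ s * Real.log n)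

theorem logZetaTerm_nonneg (s : ℝ) (n : ℕ) : 0 ≤ logZetaTerm s n := by
  unfold logZetaTerm
  positivity

theorem summable_logZetaTerm {s : ℝ} (hs : 1 < s) : Summable (logZetaTerm s) := by
  refine Summable.of_nonneg_of_le (logZetaTerm_nonneg s) (fun n ↦ ?_)
    (Real.summable_one_div_nat_rpow.mpr hs)
  rw [logZetaTerm, mul_comm, ← div_div]
  gcongr
  exact div_le_one_of_le₀ vonMangoldt_le_log (Real.log_natCast_nonneg n)

theorem tsum_logZetaTerm_le {s : ℝ} (hs : 1 < s) :
    ∑' n, logZetaTerm s n ≤ Real.log (1 + 1 / (s - 1)) :=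
  (log_riemannZeta_eq hs).symm.trans_le
    (Real.log_le_log (riemannZeta_re_pos_of_one_lt hs) (riemannZeta_ofReal_re_le hs))

theorem tsum_logZetaTerm_one_add_inv_le {L : ℝ} (hL : 0 < L) :
    ∑' n, logZetaTerm (1 + 1 / L) n ≤ Real.log L + 1 / L := calc
  ∑' n, logZetaTerm (1 + 1 / L) n ≤ Real.log (1 + 1 / (1 + 1 / L - 1)) :=
    tsum_logZetaTerm_le (by simpa using hL)
  _ = Real.log L + Real.log (1 + 1 / L) := by
    rw [← Real.log_mul hL.ne' (by positivity), add_sub_cancel_left, one_div_one_div, mul_add,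
      mul_one, mul_one_div_cancel hL.ne', add_comm]
  _ ≤ Real.log L + 1 / L := by
    gcongr
    linarith [Real.log_le_sub_one_of_pos (x := 1 + 1 / L) (by positivity)]

end Zeta

section PerronTerm

theorem rpow_div_mul_abs_log_le_of_lt {c x y : ℝ} (hc : 0 ≤ c) (hx : 0 < x) (hxy : x < y) :
    (x / y) ^ c / (y * |Real.log (x / y)|) ≤ (y - x)⁻¹ := by
  have hy : 0 < y := hx.trans hxy
  have hlog : y - x ≤ y * |Real.log (x / y)| := calc
    y - x = y * (1 - x / y) := by field_simp
    _ ≤ y * |Real.log (x / y)| := by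
      gcongr
      linarith [neg_le_abs (Real.log (x / y)), Real.log_le_sub_one_of_pos (div_pos hx hy)]
  have hpow : (x / y) ^ c ≤ 1 := Real.rpow_le_one (by positivity) ((div_le_one hy).mpr hxy.le) hc
  rw [inv_eq_one_div]
  gcongr

theorem rpow_div_mul_abs_log_le_of_gt {c x y : ℝ} (hc : c ≤ 1) (hy : 0 < y) (hyx : y < x) :
    (x / y) ^ c / (y * |Real.log (x / y)|) ≤ (x / y) ^ 2 * (x - y)⁻¹ := by
  have hx : 0 < x := hy.trans hyx
  have hone : 1 ≤ x / y := (one_le_div hy).mpr hyx.le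
  have hlog : (x - y) / (x / y) ≤ y * |Real.log (x / y)| := calc
    (x - y) / (x / y) = y * (1 - (x / y)⁻¹) := by field_simp
    _ ≤ y * |Real.log (x / y)| := by
      gcongr
      exact (Real.one_sub_inv_le_log_of_pos (by positivity)).trans (le_abs_self _)
  have : 0 < (x - y) / (x / y) := div_pos (sub_pos.mpr hyx) (div_pos hx hy)
  calc (x / y) ^ c / (y * |Real.log (x / y)|) ≤ (x / y) / ((x - y) / (x / y)) := by
        gcongr
        exact Real.rpow_le_self_of_one_le hone hc
    _ = (x / y) ^ 2 * (x - y)⁻¹ := by rw [div_div_eq_mul_div, ← sq, div_eq_mul_inv]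

/-- The `n`-th term of the error series in Perron's formula, with the truncation
`min 1 (1 / (T * |log (x / n)|))` replaced by `1 / |log (x / n)|`. -/
noncomputable def perronTerm (x : ℝ) (n : ℕ) : ℝ :=
  (x / n) ^ (1 / Real.log x) * (Λ n / (n * Real.log n)) * (1 / |Real.log (x / n)|)

variable {x : ℝ} {n : ℕ}

theorem perronTerm_nonneg (hx : 0 ≤ x) : 0 ≤ perronTerm x n := by
  unfold perronTerm
  positivity

theorem perronTerm_le_rpow_div_mul_abs_log (hx : 0 ≤ x) :
    perronTerm x n ≤ (x / n) ^ (1 / Real.log x) / (n * |Real.log (x / n)|) := calc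
  perronTerm x n = Λ n / Real.log n * ((x / n) ^ (1 / Real.log x) / (n * |Real.log (x / n)|)) := by
    rw [perronTerm]
    ring
  _ ≤ (x / n) ^ (1 / Real.log x) / (n * |Real.log (x / n)|) :=
    mul_le_of_le_one_left (by positivity)
      (div_le_one_of_le₀ vonMangoldt_le_log (Real.log_natCast_nonneg n))

theorem perronTerm_eq_exp_one_div_mul_logZetaTerm (hx : 0 < x) (hx1 : x ≠ 1) :
    perronTerm x n = Real.exp 1 / |Real.log (x / n)| * logZetaTerm (1 + 1 / Real.log x) n := by
  obtain rfl | hn := n.eq_zero_or_pos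
  · simp [perronTerm, logZetaTerm]
  have hn : (0 : ℝ) < n := mod_cast hn
  rw [perronTerm, logZetaTerm, Real.div_rpow hx.le hn.le, Real.rpow_add hn, Real.rpow_one,
    one_div (Real.log x), Real.rpow_inv_log hx hx1]
  ring

theorem exp_one_div_log_three_halves_le : Real.exp 1 / Real.log (3 / 2) ≤ 6.8 := by
  have hlog : (0.4 : ℝ) ≤ Real.log (3 / 2) := by
    have := Real.le_log_one_add_of_nonneg (x := 1 / 2) (by norm_num)
    norm_num at this ⊢
    exact this
  rw [div_le_iff₀ (by linarith)]
  linarith [Real.exp_one_lt_d9]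

theorem perronTerm_le_logZetaTerm (hx : 0 < x) (hx1 : x ≠ 1)
    (hfar : Real.log (3 / 2) ≤ |Real.log (x / n)|) :
    perronTerm x n ≤ 6.8 * logZetaTerm (1 + 1 / Real.log x) n := by
  rw [perronTerm_eq_exp_one_div_mul_logZetaTerm hx hx1]
  have : 0 < Real.log (3 / 2) := Real.log_pos (by norm_num)
  have hcoeff : Real.exp 1 / |Real.log (x / n)| ≤ 6.8 :=
    (by gcongr : _ ≤ Real.exp 1 / Real.log (3 / 2)).trans exp_one_div_log_three_halves_le
  exact mul_le_mul_of_nonneg_right hcoeff (logZetaTerm_nonneg _ _)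

theorem perronTerm_le_inv_sub_of_lt (hx : 1 ≤ x) (hxn : x < n) :
    perronTerm x n ≤ ((n : ℝ) - x)⁻¹ :=
  have hx0 : 0 < x := zero_lt_one.trans_le hx
  (perronTerm_le_rpow_div_mul_abs_log hx0.le).trans
    (rpow_div_mul_abs_log_le_of_lt (one_div_nonneg.mpr (Real.log_nonneg hx)) hx0 hxn)

theorem perronTerm_le_inv_sub_of_gt (hlog : 1 ≤ Real.log x) (hn : 0 < n) (hnx : n < x)
    (hratio : x / n ≤ 3 / 2) :
    perronTerm x n ≤ 9 / 4 * (x - n)⁻¹ := by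
  have hn : (0 : ℝ) < n := mod_cast hn
  have hx : 0 < x := hn.trans hnx
  have : 0 < x - n := sub_pos.mpr hnx
  calc perronTerm x n ≤ (x / n) ^ (1 / Real.log x) / (n * |Real.log (x / n)|) :=
        perronTerm_le_rpow_div_mul_abs_log hx.le
    _ ≤ (x / n) ^ 2 * (x - n)⁻¹ := rpow_div_mul_abs_log_le_of_gt
        ((div_le_one (zero_lt_one.trans_le hlog)).mpr hlog) hn hnx
    _ ≤ (3 / 2) ^ 2 * (x - n)⁻¹ := by gcongr
    _ = 9 / 4 * (x - n)⁻¹ := by norm_num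

theorem perronTerm_eq_zero (hn : ¬IsPrimePow n) : perronTerm x n = 0 := by
  simp [perronTerm, vonMangoldt_eq_zero_iff.mpr hn]

variable {a : ℕ}

theorem perronTerm_le_of_lt (ha : 1 ≤ a) (hx : x = a + 1 / 2) (han : a < n) :
    perronTerm x n ≤ (if n ∈ primePowersIoc a (2 * a) then ((n : ℝ) - x)⁻¹ else 0) +
      6.8 * logZetaTerm (1 + 1 / Real.log x) n := by
  have ha : (1 : ℝ) ≤ a := mod_cast ha
  have hzeta := logZetaTerm_nonneg (1 + 1 / Real.log x) n
  split_ifs with hmem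
  · have hxn : (a : ℝ) + 1 ≤ n := mod_cast han
    linarith [perronTerm_le_inv_sub_of_lt (x := x) (n := n) (by linarith) (by linarith)]
  by_cases hn : IsPrimePow n
  · have han : 2 * a + 1 ≤ n := by
      by_contra! h
      exact hmem (mem_primePowersIoc.mpr ⟨⟨han, by omega⟩, hn⟩)
    have han : 2 * (a : ℝ) + 1 ≤ n := mod_cast han
    have hfar : Real.log (3 / 2) ≤ |Real.log (x / n)| := by
      rw [← abs_neg, ← Real.log_inv, inv_div]
      refine (Real.log_le_log (by norm_num) ?_).trans (le_abs_self _)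
      rw [le_div_iff₀ (by linarith)]
      linarith
    linarith [perronTerm_le_logZetaTerm (by linarith) (by linarith) hfar]
  · rw [perronTerm_eq_zero hn]
    positivity

theorem perronTerm_le_of_le (hx : x = a + 1 / 2) (hlog : 1 ≤ Real.log x) (hna : n ≤ a) :
    perronTerm x n ≤ (if n ∈ primePowersIoc (a / 2) a then 9 / 4 * (x - n)⁻¹ else 0) +
      6.8 * logZetaTerm (1 + 1 / Real.log x) n := by
  have hzeta := logZetaTerm_nonneg (1 + 1 / Real.log x) n
  have hnx : (n : ℝ) < x := by
    have : (n : ℝ) ≤ a := mod_cast hna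
    linarith
  have hx0 : 0 < x := n.cast_nonneg.trans_lt hnx
  have hx1 : x ≠ 1 := by
    rintro rfl
    norm_num at hlog
  have hsub : 0 ≤ (x - n)⁻¹ := inv_nonneg.mpr (by linarith)
  by_cases hn : IsPrimePow n
  · obtain hratio | hratio := le_or_gt (x / n) (3 / 2)
    · have hmem : n ∈ primePowersIoc (a / 2) a := by
        rw [div_le_iff₀ (mod_cast hn.pos)] at hratio
        have : (a : ℝ) < 2 * n := by linarith
        norm_cast at this
        exact mem_primePowersIoc.mpr ⟨⟨by omega, hna⟩, hn⟩
      rw [if_pos hmem]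
      linarith [perronTerm_le_inv_sub_of_gt hlog hn.pos hnx hratio]
    · have hfar : Real.log (3 / 2) ≤ |Real.log (x / n)| :=
        (Real.log_le_log (by norm_num) hratio.le).trans (le_abs_self _)
      have := perronTerm_le_logZetaTerm hx0 hx1 hfar
      split_ifs <;> linarith
  · rw [perronTerm_eq_zero hn]
    positivity

theorem perronTerm_le (hx : x = a + 1 / 2) (hlog : 1 ≤ Real.log x) (n : ℕ) :
    perronTerm x n ≤ (if n ∈ primePowersIoc a (2 * a) then ((n : ℝ) - x)⁻¹ else 0) +
      (if n ∈ primePowersIoc (a / 2) a then 9 / 4 * (x - n)⁻¹ else 0) +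
      6.8 * logZetaTerm (1 + 1 / Real.log x) n := by
  obtain hna | han := le_or_gt n a
  · rw [if_neg fun h ↦ hna.not_gt (mem_primePowersIoc.mp h).1.1, zero_add]
    exact perronTerm_le_of_le hx hlog hna
  · rw [if_neg fun h ↦ han.not_ge (mem_primePowersIoc.mp h).1.2, add_zero]
    have ha : 1 ≤ a := Nat.one_le_iff_ne_zero.mpr fun h ↦ by
      have hx0 : x = 1 / 2 := by simpa [h] using hx
      linarith [Real.log_nonpos (by rw [hx0]; norm_num) (by rw [hx0]; norm_num : x ≤ 1)]
    exact perronTerm_le_of_lt ha hx han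

theorem sum_ite_mem_le_sum {ι : Type*} [DecidableEq ι] {A : Finset ι} {f : ι → ℝ}
    (hf : ∀ i ∈ A, 0 ≤ f i) (u : Finset ι) :
    ∑ i ∈ u, (if i ∈ A then f i else 0) ≤ ∑ i ∈ A, f i := by
  rw [sum_ite_mem]
  exact sum_le_sum_of_subset_of_nonneg inter_subset_right fun i hi _ ↦ hf i hi

/-- With `h ≤ 0.31 + log log x` and the factor `1 + 9 / 4` of the two sides, the constants are
`36.05 = 9 * (1 + 9 / 4) + 6.8` and `54.5675 = (9 * 0.31 + 14) * (1 + 9 / 4)`. -/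
theorem sum_perronTerm_le (hx : x = a + 1 / 2) (hlog : 1 ≤ Real.log x) (u : Finset ℕ) :
    ∑ n ∈ u, perronTerm x n ≤
      36.05 * Real.log (Real.log x) + 54.5675 + 6.8 / Real.log x := by
  set h := (harmonic (Nat.log 2 a / 3) : ℝ)
  have hharm : h ≤ 0.31 + Real.log (Real.log x) := harmonic_log_div_three_le (by linarith) hlog
  have hright : ∑ n ∈ u, (if n ∈ primePowersIoc a (2 * a) then ((n : ℝ) - x)⁻¹ else 0) ≤
      9 * h + 14 := by
    refine (sum_ite_mem_le_sum (fun n hn ↦ inv_nonneg.mpr ?_) u).trans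
      (hx ▸ sum_primePowersIoc_right_le a)
    have : (a : ℝ) + 1 ≤ n := mod_cast (mem_primePowersIoc.mp hn).1.1
    linarith
  have hleft : ∑ n ∈ u, (if n ∈ primePowersIoc (a / 2) a then 9 / 4 * (x - n)⁻¹ else 0) ≤
      9 / 4 * (9 * h + 14) := by
    refine (sum_ite_mem_le_sum (fun n hn ↦ mul_nonneg (by norm_num) (inv_nonneg.mpr ?_)) u).trans
      ?_
    · have : (n : ℝ) ≤ a := mod_cast (mem_primePowersIoc.mp hn).1.2
      linarith
    · rw [← mul_sum, hx]
      gcongr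
      exact sum_primePowersIoc_left_le a
  have hfar : ∑ n ∈ u, logZetaTerm (1 + 1 / Real.log x) n ≤
      Real.log (Real.log x) + 1 / Real.log x :=
    have hlog : 0 < Real.log x := zero_lt_one.trans_le hlog
    ((summable_logZetaTerm (by simpa using hlog)).sum_le_tsum u
      fun n _ ↦ logZetaTerm_nonneg _ n).trans (tsum_logZetaTerm_one_add_inv_le hlog)
  calc ∑ n ∈ u, perronTerm x n
      ≤ 9 * h + 14 + 9 / 4 * (9 * h + 14) +
          6.8 * (Real.log (Real.log x) + 1 / Real.log x) := by
        refine (sum_le_sum fun n _ ↦ perronTerm_le hx hlog n).trans ?_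
        rw [sum_add_distrib, sum_add_distrib, ← mul_sum]
        gcongr
    _ ≤ 36.05 * Real.log (Real.log x) + 54.5675 + 6.8 / Real.log x := by
        rw [div_eq_mul_one_div 6.8]
        linarith

end PerronTerm

theorem perron_bound_le {x : ℝ} (hlog : 1 ≤ Real.log x) :
    36.05 * Real.log (Real.log x) + 54.5675 + 6.8 / Real.log x ≤
      40.23 * Real.log (Real.log x) + 58.12 + 3.87 / Real.log x
        + 5.22 * Real.log x / Real.sqrt x - 1.84 / Real.sqrt x := by
  have hloglog := Real.log_nonneg hlog
  have hinv : 1 / Real.log x ≤ 1 := (div_le_one (zero_lt_one.trans_le hlog)).mpr hlog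
  have hsqrt : 1.84 / Real.sqrt x ≤ 5.22 * Real.log x / Real.sqrt x := by
    gcongr
    linarith
  rw [div_eq_mul_one_div 6.8, div_eq_mul_one_div 3.87]
  linarith

theorem truncated_perron_error_bound_general {m : ℕ} {x T : ℝ} (hx : x = m + 1 / 2)
    (hx' : 3.5 ≤ x) (hT : 0 < T) :
    (∑' n : ℕ, if 2 ≤ n then
        (x / n) ^ (1 / Real.log x) * (Λ n / (n * Real.log n)) *
          min 1 (1 / (T * |Real.log (x / n)|))
      else 0)
    ≤ (40.23 * Real.log (Real.log x) + 58.12 + 3.87 / Real.log x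
        + 5.22 * Real.log x / Real.sqrt x - 1.84 / Real.sqrt x) / T := by
  have hx0 : 0 < x := by linarith
  have hlog : 1 ≤ Real.log x := (Real.le_log_iff_exp_le hx0).mpr (by linarith [Real.exp_one_lt_d9])
  refine Real.tsum_le_of_sum_le (fun n ↦ ?_) fun u ↦ ?_
  · rw [Pi.zero_apply]
    positivity
  refine (sum_le_sum (g := fun n ↦ perronTerm x n / T) fun n _ ↦ ?_).trans ?_
  · split_ifs
    · rw [perronTerm, mul_div_assoc, div_div, mul_comm |_| T]
      gcongr
      exact min_le_right ..
    · exact div_nonneg (perronTerm_nonneg hx0.le) hT.le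
  · rw [← sum_div]
    gcongr
    exact (sum_perronTerm_le hx hlog u).trans (perron_bound_le hlog)

open ArithmeticFunction in
/-- Theorem 1 (main theorem): explicit bound for the error sum in the truncated
Perron formula for the logarithm of an `L`-function. -/
theorem truncated_perron_error_bound (x T : ℝ)
    (hx : ∃ m : ℕ, 0 < m ∧ x = m + 1 / 2) (hx' : 3.5 ≤ x)
    (hT : 1 / Real.log (3 / 2) ≤ T) :
    (∑' n : ℕ, if 2 ≤ n then
        (x / n) ^ (1 / Real.log x) * (Λ n / (n * Real.log n)) *
          min 1 (1 / (T * |Real.log (x / n)|))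
      else 0)
    ≤ (40.23 * Real.log (Real.log x) + 58.12 + 3.87 / Real.log x
        + 5.22 * Real.log x / Real.sqrt x - 1.84 / Real.sqrt x) / T := by
  obtain ⟨m, -, hx⟩ := hx
  exact truncated_perron_error_bound_general hx hx'
    ((one_div_pos.mpr (Real.log_pos (by norm_num))).trans_le hT)
end

section
/- For every real σ > 0, log ζ(1+σ) ≤ −log σ + γ·σ, where ζ is the Riemann zeta function and γ is the Euler–Mascheroni constant. -/
/-!
For `0 ≤ r ≤ s` the function `s (s + 1) x ^ (-r) - r (r + 1) x ^ (-s)` is convex on `[1, ∞)`, so the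
trapezoidal rule overestimates its integral. Hence the error of the trapezoidal rule for `x ^ (-s)`
on `[n, n + 1]` is at most `s (s + 1) / 2` times the error for `x⁻¹`. Summed over `n ≥ 1`, the
errors are `ζ(s) - 1 / (s - 1) - 1 / 2` for `x ^ (-s)` and `γ - 1 / 2` for `x⁻¹`, which gives
`ζ(s) ≤ 1 / (s - 1) + 1 / 2 + s (s + 1) / 2 * (γ - 1 / 2)`. With `s = 1 + σ`, multiplying by `σ`
turns the right-hand side into a cubic in `σ` that agrees with `exp (γ σ)` to first order, and it
stays below the quartic Taylor polynomial of `exp (γ σ)` because `1 / 2 < γ < 3 / 5`.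
-/

open Set Filter Topology MeasureTheory ZetaAsymptotics
open Real (eulerMascheroniConstant)

theorem trapezoidal_error_one_nonneg_of_convexOn {f : ℝ → ℝ} {a b : ℝ} (hab : a ≤ b)
    (hf : ConvexOn ℝ (Icc a b) f) (hfi : IntervalIntegrable f volume a b) :
    0 ≤ trapezoidal_error f 1 a b := by
  rcases hab.eq_or_lt with rfl | hab'
  · simp
  have hba : 0 < b - a := sub_pos.2 hab'
  let chord : ℝ → ℝ := fun x ↦ (b - x) / (b - a) * f a + (x - a) / (b - a) * f b
  have hle_chord : ∀ x ∈ Icc a b, f x ≤ chord x := fun x hx ↦ by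
    have hcombo : (b - x) / (b - a) * a + (x - a) / (b - a) * b = x := by field
    have h := hf.2 (left_mem_Icc.2 hab) (right_mem_Icc.2 hab)
      (div_nonneg (sub_nonneg.2 hx.2) hba.le) (div_nonneg (sub_nonneg.2 hx.1) hba.le)
      (by field)
    simpa only [smul_eq_mul, hcombo] using h
  have hchord : Continuous chord := by fun_prop
  have hint_chord : ∫ x in a..b, chord x = trapezoidal_integral f 1 a b := by
    simp only [chord]
    rw [intervalIntegral.integral_add (Continuous.intervalIntegrable (by fun_prop) _ _)
      (Continuous.intervalIntegrable (by fun_prop) _ _), trapezoidal_integral_one]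
    simp only [intervalIntegral.integral_mul_const, intervalIntegral.integral_div,
      intervalIntegral.integral_sub intervalIntegrable_const intervalIntegral.intervalIntegrable_id,
      intervalIntegral.integral_sub intervalIntegral.intervalIntegrable_id intervalIntegrable_const,
      integral_id, intervalIntegral.integral_const, smul_eq_mul]
    field
  rw [trapezoidal_error, sub_nonneg, ← hint_chord]
  exact intervalIntegral.integral_mono_on hab hfi (hchord.intervalIntegrable a b) hle_chord

theorem convexOn_sub_rpow_neg {r s : ℝ} (hr : 0 ≤ r) (hrs : r ≤ s) :
    ConvexOn ℝ (Ici 1) fun x : ℝ ↦ s * (s + 1) * x ^ (-r) - r * (r + 1) * x ^ (-s) := by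
  have hderiv (p : ℝ) : ∀ x ∈ interior (Ici (1 : ℝ)),
      HasDerivWithinAt (· ^ p) (p * x ^ (p - 1)) (interior (Ici 1)) x := fun x hx ↦
    have hx0 : x ≠ 0 := (zero_lt_one.trans_le (interior_subset hx)).ne'
    (Real.hasDerivAt_rpow_const (.inl hx0)).hasDerivWithinAt
  have hcont (p : ℝ) : ContinuousOn (fun x : ℝ ↦ x ^ p) (Ici 1) := fun x hx ↦
    (Real.continuousAt_rpow_const x p (.inl (zero_lt_one.trans_le hx).ne')).continuousWithinAt
  refine convexOn_of_hasDerivWithinAt2_nonneg (convex_Ici 1)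
    (f'' := fun x ↦ r * (r + 1) * (s * (s + 1)) * (x ^ (-r - 1 - 1) - x ^ (-s - 1 - 1)))
    (((hcont _).const_mul _).sub ((hcont _).const_mul _))
    (fun x hx ↦ ((hderiv _ x hx).const_mul _).sub ((hderiv _ x hx).const_mul _))
    (fun x hx ↦ ?_) (fun x hx ↦ ?_)
  · exact ((((hderiv _ x hx).const_mul (-r)).const_mul _).sub
      (((hderiv _ x hx).const_mul (-s)).const_mul _)).congr_deriv (by ring)
  · have hx' : 1 ≤ x := interior_subset hx
    have hs : 0 ≤ s := hr.trans hrs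
    have hle : x ^ (-s - 1 - 1) ≤ x ^ (-r - 1 - 1) := by gcongr
    exact mul_nonneg (by positivity) (sub_nonneg.2 hle)

theorem trapezoidal_error_rpow_neg_le {r s a b : ℝ} (hr : 0 ≤ r) (hrs : r ≤ s) (ha : 1 ≤ a)
    (hab : a ≤ b) :
    r * (r + 1) * trapezoidal_error (· ^ (-s)) 1 a b ≤
      s * (s + 1) * trapezoidal_error (· ^ (-r)) 1 a b := by
  have hint (p : ℝ) : IntervalIntegrable (· ^ p) volume a b :=
    intervalIntegral.intervalIntegrable_rpow
      (.inr (notMem_uIcc_of_lt (by linarith) (by linarith)))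
  have hnonneg := trapezoidal_error_one_nonneg_of_convexOn hab
    ((convexOn_sub_rpow_neg hr hrs).subset (Icc_subset_Ici_self.trans (Ici_subset_Ici.2 ha))
      (convex_Icc a b)) (((hint (-r)).const_mul _).sub ((hint (-s)).const_mul _))
  simp only [trapezoidal_error, trapezoidal_integral_one] at hnonneg ⊢
  rw [intervalIntegral.integral_sub ((hint _).const_mul _) ((hint _).const_mul _),
    intervalIntegral.integral_const_mul, intervalIntegral.integral_const_mul] at hnonneg
  linarith

theorem trapezoidal_error_rpow_neg_eq_sub_term {n : ℕ} (hn : 0 < n) (s : ℝ) :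
    trapezoidal_error (· ^ (-s)) 1 n (n + 1) =
      ((n : ℝ) ^ (-s) - ((n : ℝ) + 1) ^ (-s)) / 2 - s * term n s := by
  have hn' : (0 : ℝ) < n := Nat.cast_pos.2 hn
  have hpos : ∀ x ∈ uIcc (n : ℝ) (n + 1), 0 < x := fun x hx ↦ by
    rw [uIcc_of_le (by simp)] at hx
    exact hn'.trans_le hx.1
  have hparts := intervalIntegral.integral_mul_deriv_eq_deriv_mul (a := (n : ℝ)) (b := n + 1)
    (u := fun x ↦ x - n) (u' := fun _ ↦ 1)
    (fun x _ ↦ (hasDerivAt_id x).sub_const _)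
    (fun x hx ↦ Real.hasDerivAt_rpow_const (p := -s) (.inl (hpos x hx).ne'))
    (by simp)
    ((intervalIntegral.intervalIntegrable_rpow (.inr fun h ↦ (hpos 0 h).false)).const_mul _)
  have hterm : ∫ x in (n : ℝ)..n + 1, (x - n) * (-s * x ^ (-s - 1)) = -s * term n s := by
    rw [term, ← intervalIntegral.integral_const_mul]
    refine intervalIntegral.integral_congr fun x hx ↦ ?_
    simp only [show -s - 1 = -(s + 1) by ring, Real.rpow_neg (hpos x hx).le]
    ring
  simp only [one_mul] at hparts
  rw [hterm] at hparts
  rw [trapezoidal_error, trapezoidal_integral_one]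
  linarith

theorem antitoneOn_term {n : ℕ} (hn : 0 < n) : AntitoneOn (term n) (Ioi 0) := by
  intro r hr s hs hrs
  refine intervalIntegral.integral_mono_on (by simp) (term_welldef hn hs) (term_welldef hn hr)
    fun x hx ↦ ?_
  have hx1 : 1 ≤ x := (Nat.one_le_cast.2 hn).trans hx.1
  have hxn : 0 ≤ x - n := sub_nonneg.2 hx.1
  gcongr

theorem hasSum_term {s : ℝ} (hs : 1 ≤ s) : HasSum (fun n ↦ term (n + 1) s) (termTSum s) :=
  (term_tsum_one.summable.of_nonneg_of_le (fun n ↦ term_nonneg (n + 1) s) fun n ↦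
    antitoneOn_term n.succ_pos (mem_Ioi.2 zero_lt_one) (zero_lt_one.trans_le hs) hs).hasSum

theorem hasSum_trapezoidal_error_rpow_neg {s : ℝ} (hs : 1 ≤ s) :
    HasSum (fun n : ℕ ↦ trapezoidal_error (· ^ (-s)) 1 ((n + 1 : ℕ) : ℝ) ((n + 1 : ℕ) + 1))
      (1 / 2 - s * termTSum s) := by
  let f : ℕ → ℝ := fun n ↦ ((n + 1 : ℕ) : ℝ) ^ (-s)
  have htelescope : HasSum (fun n ↦ f n - f (n + 1)) 1 := by
    rw [hasSum_iff_tendsto_nat_of_nonneg]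
    · simp_rw [Finset.sum_range_sub']
      have hf : Tendsto f atTop (𝓝 0) := (tendsto_rpow_neg_atTop (zero_lt_one.trans_le hs)).comp
        (tendsto_natCast_atTop_atTop.comp (tendsto_add_atTop_nat 1))
      simpa [f] using hf.const_sub (f 0)
    · intro n
      rw [sub_nonneg]
      exact Real.rpow_le_rpow_of_nonpos (by positivity) (by simp) (by linarith)
  refine ((htelescope.div_const 2).sub ((hasSum_term hs).mul_left s)).congr_fun fun n ↦ ?_
  rw [trapezoidal_error_rpow_neg_eq_sub_term n.succ_pos]
  simp [f]

theorem riemannZeta_re_sub_one_div_eq {s : ℝ} (hs : 1 < s) :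
    (riemannZeta s).re - 1 / (s - 1) = 1 - s * termTSum s := by
  rw [← zeta_limit_aux1 hs, zeta_eq_tsum_one_div_nat_add_one_cpow (by simpa using hs),
    ← Complex.ofReal_re (∑' n : ℕ, 1 / (n + 1 : ℝ) ^ s), Complex.ofReal_tsum]
  congr 3 with n
  rw [Complex.ofReal_div, Complex.ofReal_cpow (by positivity)]
  norm_cast

theorem riemannZeta_re_le {s : ℝ} (hs : 1 < s) :
    (riemannZeta s).re ≤
      1 / (s - 1) + 1 / 2 + s * (s + 1) / 2 * (eulerMascheroniConstant - 1 / 2) := by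
  have hle := hasSum_le (fun n ↦ trapezoidal_error_rpow_neg_le zero_le_one hs.le
      (by simp) (by simp))
    ((hasSum_trapezoidal_error_rpow_neg hs.le).mul_left _)
    ((hasSum_trapezoidal_error_rpow_neg le_rfl).mul_left _)
  have hterm_one : termTSum 1 = 1 - eulerMascheroniConstant := term_tsum_one.tsum_eq
  rw [hterm_one] at hle
  linarith [riemannZeta_re_sub_one_div_eq hs]

-- The final comparison needs `γ ≤ (3 - √3) / 2 ≈ 0.634`, so Mathlib's `γ < 2 / 3` is too weak.
theorem eulerMascheroniConstant_lt_three_fifths : eulerMascheroniConstant < 3 / 5 := by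
  have hharmonic : (harmonic 32 : ℝ) < 406 / 100 := by
    norm_num [harmonic, Finset.sum_range_succ]
  have hlog : Real.log 32 = 5 * Real.log 2 := by
    rw [show (32 : ℝ) = 2 ^ 5 by norm_num, Real.log_pow, Nat.cast_ofNat]
  calc eulerMascheroniConstant < Real.eulerMascheroniSeq' 32 :=
        Real.eulerMascheroniConstant_lt_eulerMascheroniSeq' 32
    _ = harmonic 32 - 5 * Real.log 2 := by simp [Real.eulerMascheroniSeq', hlog]
    _ < 3 / 5 := by linarith [Real.log_two_gt_d9]

theorem cubic_le_exp_mul {c x : ℝ} (hc : 1 / 2 ≤ c) (hc' : c ≤ 3 / 5) (hx : 0 ≤ x) :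
    1 + x / 2 + x * (1 + x) * (2 + x) / 2 * (c - 1 / 2) ≤ Real.exp (c * x) := by
  -- `hcoeff₂`, `hcoeff₃`, `hcoeff₄` bound the coefficients of `x ^ 2`, `x ^ 3`, `x ^ 4` in the
  -- quartic Taylor polynomial of `exp (c * x)` minus the left-hand side.
  have hcoeff₂ : 3 / 100 ≤ c ^ 2 / 2 - 3 / 2 * (c - 1 / 2) := by nlinarith
  have hcoeff₃ : -(7 / 500) ≤ c ^ 3 / 6 - (c - 1 / 2) / 2 := by nlinarith
  have hcoeff₄ : 1 / 384 ≤ c ^ 4 / 24 := by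
    linarith [pow_le_pow_left₀ (by norm_num) hc 4]
  have hquad : 0 ≤ 3 / 100 - 7 / 500 * x + x ^ 2 / 384 := by nlinarith [sq_nonneg (x - 8 / 3)]
  have hexp : 1 + c * x + (c * x) ^ 2 / 2 + (c * x) ^ 3 / 6 + (c * x) ^ 4 / 24 ≤
      Real.exp (c * x) := by
    simpa [Finset.sum_range_succ, Nat.factorial] using
      Real.sum_le_exp_of_nonneg (x := c * x) (by positivity) 5
  have hcoeff : 0 ≤ c ^ 2 / 2 - 3 / 2 * (c - 1 / 2) + (c ^ 3 / 6 - (c - 1 / 2) / 2) * x +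
      c ^ 4 / 24 * x ^ 2 := by
    nlinarith [mul_le_mul_of_nonneg_right hcoeff₃ hx,
      mul_le_mul_of_nonneg_right hcoeff₄ (sq_nonneg x)]
  linarith [mul_nonneg (sq_nonneg x) hcoeff]

theorem riemannZeta_re_le_exp_div {s : ℝ} (hs : 1 < s) :
    (riemannZeta s).re ≤ Real.exp (eulerMascheroniConstant * (s - 1)) / (s - 1) := by
  have hpos : 0 < s - 1 := sub_pos.2 hs
  calc (riemannZeta s).re
    _ ≤ 1 / (s - 1) + 1 / 2 + s * (s + 1) / 2 * (eulerMascheroniConstant - 1 / 2) :=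
      riemannZeta_re_le hs
    _ = (1 + (s - 1) / 2 + (s - 1) * (1 + (s - 1)) * (2 + (s - 1)) / 2 *
          (eulerMascheroniConstant - 1 / 2)) / (s - 1) := by
      field
    _ ≤ _ := by
      gcongr
      exact cubic_le_exp_mul Real.one_half_lt_eulerMascheroniConstant.le
        eulerMascheroniConstant_lt_three_fifths.le hpos.le

/-- Lemma 1: for `σ > 0`, `log ζ(1+σ) ≤ -log σ + γ σ`, where `γ` is the
Euler–Mascheroni constant.  (For real `s > 1`, `ζ(s)` is real, so we take the
real part.) -/
theorem log_zeta_le (σ : ℝ) (hσ : 0 < σ) :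
    Real.log (riemannZeta (1 + (σ : ℂ))).re
      ≤ -Real.log σ + Real.eulerMascheroniConstant * σ := by
  have hs : 1 < 1 + σ := lt_add_of_pos_right 1 hσ
  have hcast : 1 + (σ : ℂ) = ((1 + σ : ℝ) : ℂ) := by push_cast; rfl
  calc Real.log (riemannZeta (1 + (σ : ℂ))).re
    _ ≤ Real.log (Real.exp (eulerMascheroniConstant * σ) / σ) := by
      rw [hcast]
      refine Real.log_le_log (riemannZeta_re_pos_of_one_lt hs) ?_
      simpa using riemannZeta_re_le_exp_div hs
    _ = -Real.log σ + eulerMascheroniConstant * σ := by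
      rw [Real.log_div (Real.exp_ne_zero _) hσ.ne', Real.log_exp]
      ring
end

section
/- Let x > 1 be a half-integer (x = m + 1/2 for some positive integer m) and let C = 1284699552/444215525. If P is any finite set of at most eight primes, each lying in the open interval (x/2, x), then ∑_{p ∈ P} 1/(x − p) ≤ C. (Since 1/(x−p) is increasing in p, this is equivalent to the paper's statement that the sum over the largest eight primes in (x/2, x) is at most C, and the bound C is sharp.) -/
/-!
Write `x = m + 1/2`, so that a prime `p` contributes `1 / (d + 1/2)` with `d = m - p`. For `m < 10`
the primes up to `m` already have a total of at most `C`. If `m ≥ 10` then `p > 5`, and only the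
coprimality of `p` to `30` is needed: it confines `d` to a set depending on `m` modulo `30`. The
eight smallest admissible `d` are worst when `m ≡ 19 [MOD 30]`, where they are `0, 2, 6, 8, 12, 18,
20, 26`, with sum `C`. Take the smallest of these eight terms, `2/53` at `d = 26`, as a threshold
`t`: any eight terms sum to at most `8 t` plus the total excess over `t` of all terms with `d ≤ 26`,
and this bound is one explicit sum for each residue modulo `30`.
-/

open Finset

/-- Lagrangian bound, with multiplier `t`, for the largest sum of at most `k` values of `f`. -/
theorem sum_le_nsmul_add_sum_sub {ι M : Type*} [AddCommGroup M] [PartialOrder M]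
    [IsOrderedAddMonoid M] {s u : Finset ι} {f : ι → M} {k : ℕ} {t : M} (hs : #s ≤ k) (ht : 0 ≤ t)
    (hu : ∀ i ∈ u, t ≤ f i) (hsu : ∀ i ∈ s, i ∉ u → f i ≤ t) :
    ∑ i ∈ s, f i ≤ k • t + ∑ i ∈ u, (f i - t) := by
  classical
  calc ∑ i ∈ s, f i
      = #s • t + ∑ i ∈ s, (f i - t) := by rw [sum_sub_distrib, sum_const, add_sub_cancel]
    _ = #s • t + (∑ i ∈ s ∩ u, (f i - t) + ∑ i ∈ s \ u, (f i - t)) := by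
        rw [sum_inter_add_sum_sdiff]
    _ ≤ k • t + (∑ i ∈ u, (f i - t) + 0) := by
        gcongr ?_ + (?_ + ?_)
        · exact nsmul_le_nsmul_left ht hs
        · exact sum_le_sum_of_subset_of_nonneg inter_subset_right
            fun i hi _ ↦ sub_nonneg.2 (hu i hi)
        · refine sum_nonpos fun i hi ↦ sub_nonpos.2 ?_
          exact hsu i (mem_sdiff.1 hi).1 (mem_sdiff.1 hi).2
    _ = k • t + ∑ i ∈ u, (f i - t) := by rw [add_zero]

/-- The distances `d ≤ 26` from `a` down to the integers `a - d` coprime to `30`. -/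
def nearCoprimeDistances (a : ℤ) : Finset ℕ := {d ∈ range 27 | (a - d).gcd 30 = 1}

theorem nearCoprimeDistances_emod (a : ℤ) :
    nearCoprimeDistances (a % 30) = nearCoprimeDistances a := by
  refine filter_congr fun d _ ↦ ?_
  rw [Int.emod_def, sub_right_comm, Int.gcd_sub_mul_left_left]

theorem sum_nearCoprimeDistances_le (a : ℤ) :
    8 • (2 / 53 : ℚ) + ∑ d ∈ nearCoprimeDistances a, (1 / ((d : ℚ) + 1 / 2) - 2 / 53) ≤
      1284699552 / 444215525 := by
  have residues : ∀ r ∈ Ico (0 : ℤ) 30,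
      8 • (2 / 53 : ℚ) + ∑ d ∈ nearCoprimeDistances r, (1 / ((d : ℚ) + 1 / 2) - 2 / 53) ≤
        1284699552 / 444215525 := by
    decide +kernel
  rw [← nearCoprimeDistances_emod]
  exact residues _ (mem_Ico.2 ⟨Int.emod_nonneg a (by norm_num), Int.emod_lt_of_pos a (by norm_num)⟩)

theorem sum_inv_distance_le {a : ℤ} {D : Finset ℕ} (hcard : #D ≤ 8)
    (hD : ∀ d ∈ D, (a - d).gcd 30 = 1) :
    ∑ d ∈ D, 1 / ((d : ℚ) + 1 / 2) ≤ 1284699552 / 444215525 := by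
  have threshold : 1 / ((26 : ℚ) + 1 / 2) = 2 / 53 := by norm_num
  refine (sum_le_nsmul_add_sum_sub hcard (by norm_num) (fun d hd ↦ ?_) fun d hd hfar ↦ ?_).trans
    (sum_nearCoprimeDistances_le a)
  · have near : d ≤ 26 := by
      have := mem_range.1 (mem_filter.1 hd).1
      omega
    rw [← threshold]
    gcongr
    exact_mod_cast near
  · have far : 26 ≤ d := by
      by_contra! hlt
      exact hfar (mem_filter.2 ⟨mem_range.2 (by omega), hD d hd⟩)
    rw [← threshold]
    gcongr
    exact_mod_cast far

theorem sum_inv_sub_le_of_coprime_thirty {m : ℕ} {S : Finset ℕ} (hcard : #S ≤ 8)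
    (hle : ∀ n ∈ S, n ≤ m) (hcoprime : ∀ n ∈ S, n.Coprime 30) :
    ∑ n ∈ S, 1 / ((m : ℚ) + 1 / 2 - n) ≤ 1284699552 / 444215525 := by
  have hinj : Set.InjOn (m - ·) (S : Set ℕ) := fun a ha b hb hab ↦ by
    have := hle a ha
    have := hle b hb
    grind
  calc ∑ n ∈ S, 1 / ((m : ℚ) + 1 / 2 - n)
      = ∑ n ∈ S, 1 / (((m - n : ℕ) : ℚ) + 1 / 2) :=
        sum_congr rfl fun n hn ↦ by rw [Nat.cast_sub (hle n hn), sub_add_eq_add_sub]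
    _ = ∑ d ∈ S.image (m - ·), 1 / ((d : ℚ) + 1 / 2) := by rw [sum_image hinj]
    _ ≤ 1284699552 / 444215525 := by
        refine sum_inv_distance_le (a := m) (card_image_le.trans hcard) (forall_mem_image.2 ?_)
        intro n hn
        rw [Nat.cast_sub (hle n hn), sub_sub_cancel]
        exact hcoprime n hn

theorem coprime_thirty_of_five_lt {p : ℕ} (hp : p.Prime) (h5 : 5 < p) : p.Coprime 30 := by
  have hdvd : 30 ∣ Nat.factorial 5 := by decide
  exact hp.coprime_iff_not_dvd.2 fun h ↦ h5.not_ge (hp.dvd_factorial.1 (h.trans hdvd))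

theorem sum_primesLE_inv_sub_le {m : ℕ} (hm : m < 10) :
    ∑ p ∈ m.primesLE, 1 / ((m : ℚ) + 1 / 2 - p) ≤ 1284699552 / 444215525 := by
  decide +kernel +revert

theorem sum_inv_sub_le_of_lt_ten {m : ℕ} (hm : m < 10) {P : Finset ℕ}
    (hP : ∀ p ∈ P, p.Prime ∧ p ≤ m) :
    ∑ p ∈ P, 1 / ((m : ℚ) + 1 / 2 - p) ≤ 1284699552 / 444215525 := by
  have hsubset : P ⊆ m.primesLE := fun p hp ↦ Nat.mem_primesLE.2 (hP p hp).symm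
  refine (sum_le_sum_of_subset_of_nonneg hsubset fun p hp _ ↦ ?_).trans (sum_primesLE_inv_sub_le hm)
  have : (p : ℚ) ≤ m := by exact_mod_cast (Nat.mem_primesLE.1 hp).1
  exact one_div_nonneg.2 (by linarith)

/-- Lemma 3(a): for `x > 1` a half-integer, the sum of `1/(x - p)` over any set of
at most eight primes in `(x/2, x)` is at most `C = 1284699552/444215525`. -/
theorem sum_inv_x_sub_p_le (x : ℝ) (hx : ∃ m : ℕ, 0 < m ∧ x = m + 1 / 2)
    (hx1 : 1 < x) (P : Finset ℕ) (hcard : P.card ≤ 8)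
    (hP : ∀ p ∈ P, p.Prime ∧ x / 2 < p ∧ (p : ℝ) < x) :
    ∑ p ∈ P, 1 / (x - p) ≤ (1284699552 : ℝ) / 444215525 := by
  obtain ⟨m, -, rfl⟩ := hx
  have hle : ∀ p ∈ P, p ≤ m := fun p hp ↦ by
    have : (p : ℝ) < m + 1 := by linarith [(hP p hp).2.2]
    exact Nat.lt_succ_iff.1 (by exact_mod_cast this)
  have hrat : ∑ p ∈ P, 1 / ((m : ℚ) + 1 / 2 - p) ≤ 1284699552 / 444215525 := by
    obtain hm | hm := lt_or_ge m 10
    · exact sum_inv_sub_le_of_lt_ten hm fun p hp ↦ ⟨(hP p hp).1, hle p hp⟩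
    · have hfive : ∀ p ∈ P, 5 < p := fun p hp ↦ by
        have : (10 : ℝ) ≤ m := by exact_mod_cast hm
        have : (5 : ℝ) < p := by linarith [(hP p hp).2.1]
        exact_mod_cast this
      exact sum_inv_sub_le_of_coprime_thirty hcard hle
        fun p hp ↦ coprime_thirty_of_five_lt (hP p hp).1 (hfive p hp)
  rify at hrat
  exact hrat
end

section
/- Let x ≥ 3.5 be a half-integer (x = m + 1/2 for some positive integer m) and let T > 0. Then ∑_{x/2 < n < 3x/2} (x/n)^{1/log x} · (Λ(n)/(n·log n)) · min{1, 1/(T·|log(x/n)|)} ≤ (e/(T·log(3/2))) · ∑_{p, k : x/2 < p^k < 3x/2} 1/(k·|x − p^k|), where the right-hand sum runs over all pairs (p, k) with p prime and k ≥ 1 an integer such that x/2 < p^k < 3x/2. -/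
/-!
For positive `x` and `y`, `|x - y| ≤ max x y * |log (x / y)|`; since `max x n < 2 * n` as soon as
`x / 2 < n`, this gives `1 / (n * |log (x / n)|) ≤ 2 / |x - n|`. At `n = p ^ k` the quotient
`Λ n / log n` is `1 / k`, and `(x / n) ^ (1 / log x) ≤ x ^ (1 / log x) = e`, so every summand is at
most `2 * e / T` times `1 / (k * |x - n|)`. Finally `2 ≤ 1 / log (3 / 2)`.
-/

theorem tsum_eq_tsum_prime_pow {M : Type*} [AddCommMonoid M] [TopologicalSpace M] {f : ℕ → M}
    (hf : ∀ n, ¬IsPrimePow n → f n = 0) :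
    ∑' n, f n = ∑' pk : ℕ × ℕ, if pk.1.Prime ∧ 1 ≤ pk.2 then f (pk.1 ^ pk.2) else 0 := by
  have succ_injective :
      Function.Injective fun pk : Nat.Primes × ℕ ↦ ((pk.1 : ℕ), pk.2 + 1) := by
    rintro ⟨p, k⟩ ⟨q, l⟩ h
    obtain ⟨hpq, hkl⟩ := Prod.mk.inj h
    exact Prod.ext (Subtype.ext hpq) (Nat.succ.inj hkl)
  have support_subset : Function.support
        (fun pk : ℕ × ℕ ↦ if pk.1.Prime ∧ 1 ≤ pk.2 then f (pk.1 ^ pk.2) else 0) ⊆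
      Set.range fun pk : Nat.Primes × ℕ ↦ ((pk.1 : ℕ), pk.2 + 1) := by
    rintro ⟨p, k⟩ hpk
    obtain ⟨hp, hk⟩ : p.Prime ∧ 1 ≤ k := by_contra fun h ↦ hpk (if_neg h)
    exact ⟨(⟨p, hp⟩, k - 1), Prod.ext rfl (Nat.sub_add_cancel hk)⟩
  calc ∑' n, f n = ∑' n : {n // IsPrimePow n}, f n.1 :=
        (tsum_subtype_eq_of_support_subset fun n hn ↦ by_contra fun h ↦ hn (hf n h)).symm
    _ = ∑' pk : Nat.Primes × ℕ, f (pk.1 ^ (pk.2 + 1)) :=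
        (Nat.Primes.prodNatEquiv.tsum_eq fun n ↦ f n.1).symm
    _ = ∑' pk : Nat.Primes × ℕ,
          if (pk.1 : ℕ).Prime ∧ 1 ≤ pk.2 + 1 then f (pk.1 ^ (pk.2 + 1)) else 0 :=
        tsum_congr fun pk ↦ (if_pos ⟨pk.1.prop, Nat.le_add_left 1 pk.2⟩).symm
    _ = _ := succ_injective.tsum_eq support_subset

theorem finite_setOf_prime_pow_lt (b : ℝ) :
    {pk : ℕ × ℕ | pk.1.Prime ∧ 1 ≤ pk.2 ∧ (pk.1 : ℝ) ^ pk.2 < b}.Finite := by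
  obtain ⟨N, hN⟩ := exists_nat_gt b
  refine ((Set.finite_Iio N).prod (Set.finite_Iio N)).subset ?_
  rintro ⟨p, k⟩ ⟨hp, hk, hlt⟩
  have hpow : p ^ k < N := by exact_mod_cast hlt.trans hN
  exact ⟨(Nat.le_self_pow (Nat.one_le_iff_ne_zero.mp hk) p).trans_lt hpow,
    (Nat.lt_pow_self hp.one_lt).trans hpow⟩

theorem abs_sub_le_max_mul_abs_log_div {x y : ℝ} (hx : 0 < x) (hy : 0 < y) :
    |x - y| ≤ max x y * |Real.log (x / y)| := by
  wlog hxy : y ≤ x generalizing x y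
  · rw [abs_sub_comm, max_comm, ← abs_neg (Real.log _), ← Real.log_inv, inv_div]
    exact this hy hx (le_of_not_ge hxy)
  calc |x - y| = x * (1 - (x / y)⁻¹) := by
        rw [abs_of_nonneg (sub_nonneg.mpr hxy)]
        field_simp
    _ ≤ x * |Real.log (x / y)| := by
        gcongr
        exact (Real.one_sub_inv_le_log_of_pos (div_pos hx hy)).trans (le_abs_self _)
    _ = max x y * |Real.log (x / y)| := by rw [max_eq_left hxy]

theorem min_one_div_abs_log_div_le {x y T : ℝ} (hx : 0 < x) (hxy : x / 2 < y) (hne : x ≠ y)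
    (hT : 0 < T) :
    min 1 (1 / (T * |Real.log (x / y)|)) ≤ 2 * y / (T * |x - y|) := by
  have hy : 0 < y := (half_pos hx).trans hxy
  have : 0 < |x - y| := abs_pos.mpr (sub_ne_zero.mpr hne)
  have hlog : |x - y| / (2 * y) ≤ |Real.log (x / y)| := by
    rw [div_le_iff₀' (by positivity)]
    refine (abs_sub_le_max_mul_abs_log_div hx hy).trans ?_
    gcongr
    exact max_le (by linarith) (by linarith)
  calc min 1 (1 / (T * |Real.log (x / y)|)) ≤ 1 / (T * |Real.log (x / y)|) := min_le_right _ _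
    _ ≤ 1 / (T * (|x - y| / (2 * y))) := by gcongr
    _ = 2 * y / (T * |x - y|) := by field_simp

theorem div_rpow_one_div_log_le_exp_one {x y : ℝ} (hx : 1 < x) (hy : 1 ≤ y) :
    (x / y) ^ (1 / Real.log x) ≤ Real.exp 1 := by
  have hlog : 0 < Real.log x := Real.log_pos hx
  calc (x / y) ^ (1 / Real.log x) ≤ x ^ (1 / Real.log x) := by
        gcongr
        exact div_le_self (by positivity) hy
    _ ≤ Real.exp 1 := by
        rw [one_div]
        exact Real.rpow_inv_log_le_exp_one

open ArithmeticFunction in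
theorem vonMangoldt_prime_pow_div_log {p k : ℕ} (hp : p.Prime) (hk : k ≠ 0) :
    Λ (p ^ k) / Real.log ((p : ℝ) ^ k) = 1 / k := by
  have hlog : Real.log p ≠ 0 := (Real.log_pos (by exact_mod_cast hp.one_lt)).ne'
  rw [vonMangoldt_apply_pow hk, vonMangoldt_apply_prime hp, Real.log_pow]
  field_simp

open ArithmeticFunction in
theorem perron_error_prime_pow_le {x T : ℝ} {p k : ℕ} (hp : p.Prime) (hk : k ≠ 0) (hx : 1 < x)
    (hxpk : x / 2 < (p : ℝ) ^ k) (hne : x ≠ (p : ℝ) ^ k) (hT : 0 < T) :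
    (x / (p : ℝ) ^ k) ^ (1 / Real.log x) * (Λ (p ^ k) / ((p : ℝ) ^ k * Real.log ((p : ℝ) ^ k))) *
        min 1 (1 / (T * |Real.log (x / (p : ℝ) ^ k)|)) ≤
      2 * Real.exp 1 / T * (1 / (k * |x - (p : ℝ) ^ k|)) := by
  have one_le_pow : (1 : ℝ) ≤ (p : ℝ) ^ k := one_le_pow₀ (by exact_mod_cast hp.one_le)
  have : (0 : ℝ) < (p : ℝ) ^ k := zero_lt_one.trans_le one_le_pow
  rw [mul_comm ((p : ℝ) ^ k), ← div_div (Λ _), vonMangoldt_prime_pow_div_log hp hk]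
  calc _ ≤ Real.exp 1 * (1 / k / (p : ℝ) ^ k) * (2 * (p : ℝ) ^ k / (T * |x - (p : ℝ) ^ k|)) := by
        gcongr
        · exact div_rpow_one_div_log_le_exp_one hx one_le_pow
        · exact min_one_div_abs_log_div_le (zero_lt_one.trans hx) hxpk hne hT
    _ = 2 * Real.exp 1 / T * (1 / (k * |x - (p : ℝ) ^ k|)) := by field_simp

open ArithmeticFunction in
theorem perron_error_central_reduction_general (x T : ℝ)
    (hx : ∀ n : ℕ, IsPrimePow n → x ≠ n) (hT : 0 < T) :
    (∑' n : ℕ, if x / 2 < (n : ℝ) ∧ (n : ℝ) < 3 * x / 2 then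
        (x / n) ^ (1 / Real.log x) * (Λ n / (n * Real.log n)) *
          min 1 (1 / (T * |Real.log (x / n)|))
      else 0)
    ≤ 2 * Real.exp 1 / T *
        ∑' pk : ℕ × ℕ,
          if pk.1.Prime ∧ 1 ≤ pk.2 ∧ x / 2 < (pk.1 : ℝ) ^ pk.2 ∧
              (pk.1 : ℝ) ^ pk.2 < 3 * x / 2 then
            1 / (pk.2 * |x - (pk.1 : ℝ) ^ pk.2|)
          else 0 := by
  have hfin := finite_setOf_prime_pow_lt (3 * x / 2)
  rw [tsum_eq_tsum_prime_pow fun n hn ↦ by simp [vonMangoldt_apply, hn], ← tsum_mul_left]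
  simp only [← ite_and, and_assoc, Nat.cast_pow]
  refine Summable.tsum_le_tsum ?_ (summable_of_hasFiniteSupport <| hfin.subset ?_)
    (summable_of_hasFiniteSupport <| hfin.subset ?_)
  · rintro ⟨p, k⟩
    split_ifs with h
    · obtain ⟨hp, hk, hlower, hupper⟩ := h
      have hk0 : k ≠ 0 := Nat.one_le_iff_ne_zero.mp hk
      have two_le_pow : (2 : ℝ) ≤ (p : ℝ) ^ k := by
        exact_mod_cast hp.two_le.trans (Nat.le_self_pow hk0 p)
      have one_lt_x : 1 < x := by linarith
      refine perron_error_prime_pow_le hp hk0 one_lt_x hlower ?_ hT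
      exact_mod_cast hx _ (hp.isPrimePow.pow hk0)
    · simp
  · simp +contextual [Function.support_subset_iff]
  · simp +contextual [Function.support_subset_iff]

theorem natCast_add_half_ne_natCast (m n : ℕ) : (m : ℝ) + 1 / 2 ≠ n := by
  intro h
  have : 2 * m + 1 = 2 * n := by
    have : (2 * m + 1 : ℝ) = 2 * n := by linarith
    exact_mod_cast this
  omega

theorem log_three_halves_le_half : Real.log (3 / 2) ≤ 1 / 2 := by
  linarith [Real.log_le_sub_one_of_pos (show (0 : ℝ) < 3 / 2 by norm_num)]

open ArithmeticFunction in
/-- The estimate (3.5): reduction of the central part of the Perron error sum to a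
sum over prime powers `p^k` with `x/2 < p^k < 3x/2`. -/
theorem perron_error_central_reduction (x T : ℝ)
    (hx : ∃ m : ℕ, 0 < m ∧ x = m + 1 / 2) (hx' : 3.5 ≤ x) (hT : 0 < T) :
    (∑' n : ℕ, if x / 2 < (n : ℝ) ∧ (n : ℝ) < 3 * x / 2 then
        (x / n) ^ (1 / Real.log x) * (Λ n / (n * Real.log n)) *
          min 1 (1 / (T * |Real.log (x / n)|))
      else 0)
    ≤ Real.exp 1 / (T * Real.log (3 / 2)) *
        ∑' pk : ℕ × ℕ,
          if pk.1.Prime ∧ 1 ≤ pk.2 ∧ x / 2 < (pk.1 : ℝ) ^ pk.2 ∧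
              (pk.1 : ℝ) ^ pk.2 < 3 * x / 2 then
            1 / (pk.2 * |x - (pk.1 : ℝ) ^ pk.2|)
          else 0 := by
  obtain ⟨m, -, rfl⟩ := hx
  refine (perron_error_central_reduction_general _ T
    (fun n _ ↦ natCast_add_half_ne_natCast m n) hT).trans ?_
  have : 0 < Real.log (3 / 2) := Real.log_pos (by norm_num)
  gcongr ?_ * _
  calc 2 * Real.exp 1 / T = Real.exp 1 / (T * (1 / 2)) := by field_simp
    _ ≤ Real.exp 1 / (T * Real.log (3 / 2)) := by
      gcongr
      exact log_three_halves_le_half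
end
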